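/- arXiv:1605.04193 — 6 statements merged into one kernel-verified Lean document; each statement's English description precedes it below -/
import Mathlib

section
/- Let R > 0, B > 0 and let m ≥ 0 be an integer. Then there exist constants C > 0 and h₀ > 0 such that for all 0 < h < h₀, the bottom μ_m(h) of the fiber quadratic form at angular momentum m satisfies |μ_m(h) − 2hB·(BR²/(2h))^{m+1}/m! · e^{−BR²/(2h)}| ≤ C h · 2hB·(BR²/(2h))^{m+1}/m! · e^{−BR²/(2h)}; that is, μ_m(h) = 2hB (BR²/(2h))^{m+1}/m! · e^{−BR²/(2h)} (1 + O(h)) as h → 0⁺. -/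
/-!
Write `φ = r^m e^{-Br²/(4h)}` for the zero mode, `a = φ'/φ = m/r - Br/(2h)`, and `S = BR²/(2h)`.
Completing the square gives `q_m(u) = h² ∫ |u' - a u|² r dr` (`qm_eq_square`). With `u = φ v` and
`s = Br²/(2h)`, the Rayleigh quotient is `2hB` times
`∫₀^S |v_s|² s^{m+1} e^{-s} ds / ∫₀^S |v|² s^m e^{-s} ds`, so the claim is that the bottom `λ(S)` of
this Laguerre quotient with a Dirichlet condition at `S` is `S^{m+1} e^{-S} / m! · (1 + O(1/S))`.

*Lower bound.* For every real `b`, `∫ |u' - b u|² r dr ≥ 0` and an integration by parts bound `q_m`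
below by a potential (`qm_lower`). Taking `b = (log (φ f))'`, where `f > 0` solves
`s f'' + (m + 1 - s) f' = -1` on `(0, S)` with `f(S) = 0`, the potential is exactly `2hB / f`
(`qm_ge`). Explicitly `-f' = ψ = m! t^{-m-1} (e^t - ∑_{k ≤ m} t^k / k!)`, and comparing `ψ` with the
derivative of an explicit function gives `f ≤ m! e^S S^{-m-1} (1 + (m+1)(m+3)/S)` (`superSol_le`).

*Upper bound.* The trial function `v = 1 - e^{s - S}` has energy at most `S^{m+1} e^{-S}`
(`trial_energy_le`) and norm `m! (1 - O(1/S))` (`le_trial_norm`). It does not have compact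
support in the open interval; logarithmic cut-offs (`exists_cutoff`, `mum_mul_le_trial`) repair this
at arbitrarily small cost, also for `m = 0`, where a point has zero capacity in the plane.
-/

open MeasureTheory Filter Topology

noncomputable section

/-- The fiber quadratic form at angular momentum `m`:
`q_m(u) = h²∫₀^R (|u′(r)|² + (m/r − Br/(2h))²|u(r)|²) r dr − hB∫₀^R |u(r)|² r dr`. -/
def qm (R B h : ℝ) (m : ℤ) (u : ℝ → ℂ) : ℝ :=
  h ^ 2 * (∫ r in Set.Ioo (0:ℝ) R,
      (‖deriv u r‖ ^ 2 + ((m : ℝ) / r - B * r / (2 * h)) ^ 2 * ‖u r‖ ^ 2) * r)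
    - h * B * ∫ r in Set.Ioo (0:ℝ) R, ‖u r‖ ^ 2 * r

/-- `u ∈ C_c^∞((0,R); ℂ)`. -/
def IsCptSmooth0R (R : ℝ) (u : ℝ → ℂ) : Prop :=
  ContDiff ℝ (⊤ : ℕ∞) u ∧ HasCompactSupport u ∧ tsupport u ⊆ Set.Ioo 0 R

/-- The bottom of the fiber quadratic form at angular momentum `m`. -/
def mum (R B h : ℝ) (m : ℤ) : ℝ :=
  sInf { c | ∃ u : ℝ → ℂ, IsCptSmooth0R R u ∧ u ≠ 0 ∧
    c = qm R B h m u / ∫ r in Set.Ioo (0:ℝ) R, ‖u r‖ ^ 2 * r }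


/-! ### Tails of the exponential series -/

/-- The tail `∑_{k ≥ n} t^k / k!` of the exponential series, in closed form. -/
def expTail (n : ℕ) (t : ℝ) : ℝ :=
  Real.exp t - ∑ k ∈ Finset.range n, t ^ k / (Nat.factorial k : ℝ)

lemma expTail_succ (n : ℕ) (t : ℝ) :
    expTail n t = expTail (n + 1) t + t ^ n / (Nat.factorial n : ℝ) := by
  simp only [expTail, Finset.sum_range_succ]; ring

lemma hasDerivAt_expTail (n : ℕ) (t : ℝ) : HasDerivAt (expTail (n + 1)) (expTail n t) t := by
  induction n with
  | zero =>
    have h0 : expTail (0 + 1) = fun t => Real.exp t - 1 := by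
      funext x; simp [expTail]
    rw [h0]
    simpa [expTail] using (Real.hasDerivAt_exp t).sub_const 1
  | succ n ih =>
    have h1 : expTail (n + 1 + 1) =
        fun x => expTail (n + 1) x - x ^ (n + 1) / (Nat.factorial (n + 1) : ℝ) := by
      funext x; rw [expTail_succ (n + 1) x]; ring
    rw [h1]
    refine (ih.sub ((hasDerivAt_pow (n + 1) t).div_const _)).congr_deriv ?_
    rw [expTail_succ n t, Nat.factorial_succ]
    have := Nat.factorial_pos n
    push_cast
    field_simp
    simp

lemma expTail_nonneg (n : ℕ) {t : ℝ} (ht : 0 ≤ t) : 0 ≤ expTail n t :=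
  sub_nonneg.2 (Real.sum_le_exp_of_nonneg ht n)

lemma expTail_pos (n : ℕ) {t : ℝ} (ht : 0 < t) : 0 < expTail n t := by
  rw [expTail_succ]
  have := expTail_nonneg (n + 1) ht.le
  positivity

lemma expTail_le_exp (n : ℕ) {t : ℝ} (ht : 0 ≤ t) : expTail n t ≤ Real.exp t := by
  have : 0 ≤ ∑ k ∈ Finset.range n, t ^ k / (Nat.factorial k : ℝ) :=
    Finset.sum_nonneg fun k _ => by positivity
  simp only [expTail]; linarith

lemma continuous_expTail (n : ℕ) : Continuous (expTail n) := by
  unfold expTail; fun_prop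

lemma expTail_succ_zero (n : ℕ) : expTail (n + 1) 0 = 0 := by
  simp [expTail, Finset.sum_range_succ']

/-- Comparison of consecutive tails; termwise this is `t^k / k! ≤ (t / (n + 1)) t^(k-1) / (k-1)!`
for `k ≥ n + 1`. -/
lemma expTail_ratio (n : ℕ) {t : ℝ} (ht : 0 ≤ t) :
    (n + 1) * expTail (n + 1) t ≤ t * expTail n t := by
  induction n generalizing t with
  | zero =>
    have h1 := Real.add_one_le_exp (-t)
    have h2 : Real.exp t * Real.exp (-t) = 1 := by rw [← Real.exp_add]; simp
    have h3 := Real.exp_pos t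
    simp only [expTail, zero_add, Finset.range_one, Finset.sum_singleton, Finset.range_zero,
      Finset.sum_empty]
    norm_num
    nlinarith
  | succ n ih =>
    -- The difference vanishes at `0` and its derivative is the difference at the previous index.
    have hd : ∀ x : ℝ, HasDerivAt
        (fun x => x * expTail (n + 1) x - ((n : ℝ) + 1 + 1) * expTail (n + 1 + 1) x)
        (x * expTail n x - (n + 1) * expTail (n + 1) x) x := by
      intro x
      refine (((hasDerivAt_id x).mul (hasDerivAt_expTail n x)).sub
        ((hasDerivAt_expTail (n + 1) x).const_mul ((n : ℝ) + 1 + 1))).congr_deriv ?_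
      simp only [id]; ring
    have hmono := monotoneOn_of_deriv_nonneg (convex_Ici (0:ℝ))
      (fun x _ => (hd x).continuousAt.continuousWithinAt)
      (fun x _ => (hd x).differentiableAt.differentiableWithinAt)
      (fun x hx => by
        rw [(hd x).deriv]
        rw [interior_Ici] at hx
        exact sub_nonneg.2 (ih (le_of_lt hx)))
    have := hmono (Set.mem_Ici.2 le_rfl) (Set.mem_Ici.2 ht) ht
    simp only [expTail_succ_zero] at this
    push_cast
    linarith

/-! ### The supersolution -/

/-- `ψ(t) = e^t t^{-m-1} ∫₀^t s^m e^{-s} ds`, which solves `t ψ' + (m + 1 - t) ψ = 1`. -/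
def psi (m : ℕ) (t : ℝ) : ℝ := (Nat.factorial m : ℝ) * (expTail (m + 1) t / t ^ (m + 1))

/-- The supersolution `f(s) = ∫_s^S ψ`, a solution of `s f'' + (m + 1 - s) f' = -1`
with `f(S) = 0`. -/
def superSol (m : ℕ) (S s : ℝ) : ℝ := ∫ t in s..S, psi m t

lemma psi_pos (m : ℕ) {t : ℝ} (ht : 0 < t) : 0 < psi m t := by
  have := expTail_pos (m + 1) ht
  unfold psi; positivity

lemma hasDerivAt_psi (m : ℕ) {t : ℝ} (ht : 0 < t) :
    HasDerivAt (psi m) ((t * psi m t - (m + 1) * psi m t + 1) / t) t := by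
  have h := ((hasDerivAt_expTail m t).div (hasDerivAt_pow (m + 1) t)
    (by positivity)).const_mul (Nat.factorial m : ℝ)
  refine h.congr_deriv ?_
  have := Nat.factorial_pos m
  rw [expTail_succ m t]
  unfold psi
  push_cast
  field_simp
  ring

lemma continuousOn_psi (m : ℕ) : ContinuousOn (psi m) (Set.Ioi 0) :=
  fun _ ht => (hasDerivAt_psi m ht).continuousAt.continuousWithinAt

lemma intervalIntegrable_psi (m : ℕ) {s S : ℝ} (hs : 0 < s) (hsS : s ≤ S) :
    IntervalIntegrable (psi m) volume s S := by
  apply ContinuousOn.intervalIntegrable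
  apply (continuousOn_psi m).mono
  rw [Set.uIcc_of_le hsS]
  exact fun x hx => lt_of_lt_of_le hs hx.1

lemma hasDerivAt_superSol (m : ℕ) {s S : ℝ} (hs : 0 < s) (hsS : s ≤ S) :
    HasDerivAt (superSol m S) (-psi m s) s :=
  intervalIntegral.integral_hasDerivAt_left (intervalIntegrable_psi m hs hsS)
    ((continuousOn_psi m).stronglyMeasurableAtFilter isOpen_Ioi s hs)
    (hasDerivAt_psi m hs).continuousAt

lemma superSol_pos (m : ℕ) {s S : ℝ} (hs : 0 < s) (hsS : s < S) : 0 < superSol m S s :=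
  intervalIntegral.intervalIntegral_pos_of_pos_on (intervalIntegrable_psi m hs hsS.le)
    (fun _ hx => psi_pos m (hs.trans hx.1)) hsS

/-- The bound on `f` is sharp to relative order `1/S`. It comes from the explicit function
`D(t) = m! (T_{m+2}(t) t^{-m-1} + c T_{m+3}(t) t^{-m-2})`, with `T_n` the exponential tails and
`c = (m+1)(m+3)`, which satisfies `D' ≥ ψ`. -/
lemma superSol_le (m : ℕ) {s S : ℝ} (hs : 0 < s) (hsS : s < S) :
    superSol m S s ≤ (Nat.factorial m : ℝ) * Real.exp S / S ^ (m + 1) *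
      (1 + ((m : ℝ) + 1) * (m + 3) / S) := by
  set c : ℝ := ((m : ℝ) + 1) * (m + 3) with hc
  set D : ℝ → ℝ := fun t => (Nat.factorial m : ℝ) *
    (expTail (m + 1 + 1) t / t ^ (m + 1) + c * (expTail (m + 1 + 1 + 1) t / t ^ (m + 1 + 1)))
    with hD
  have hc0 : 0 ≤ c := by positivity
  have hf : (0:ℝ) < Nat.factorial m := by exact_mod_cast Nat.factorial_pos m
  have hderiv : ∀ t : ℝ, 0 < t → ∃ d, HasDerivAt D d t ∧ psi m t ≤ d := by
    intro t ht
    refine ⟨_, (((hasDerivAt_expTail (m + 1) t).div (hasDerivAt_pow (m + 1) t)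
      (by positivity)).add (((hasDerivAt_expTail (m + 1 + 1) t).div
        (hasDerivAt_pow (m + 1 + 1) t) (by positivity)).const_mul c)).const_mul
          (Nat.factorial m : ℝ), ?_⟩
    have hr := expTail_ratio (m + 1 + 1) ht.le
    push_cast at hr
    unfold psi
    refine mul_le_mul_of_nonneg_left ?_ hf.le
    rw [← sub_nonneg]
    have key : (0:ℝ) ≤ ((m:ℝ) + 1) * (m + 2) / t ^ (m + 3) *
        (t * expTail (m + 1 + 1) t - ((m:ℝ) + 3) * expTail (m + 1 + 1 + 1) t) := by
      apply mul_nonneg (by positivity)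
      linarith
    refine key.trans_eq ?_
    rw [hc]
    push_cast
    field_simp
    ring
  have hmono : MonotoneOn (fun x => superSol m S x + D x) (Set.Icc s S) := by
    have hd : ∀ x ∈ Set.Icc s S, ∃ d, HasDerivAt (fun x => superSol m S x + D x) d x ∧ 0 ≤ d := by
      intro x hx
      have hx0 := lt_of_lt_of_le hs hx.1
      obtain ⟨d, hd, hle⟩ := hderiv x hx0
      exact ⟨_, (hasDerivAt_superSol m hx0 hx.2).add hd, by linarith⟩
    apply monotoneOn_of_deriv_nonneg (convex_Icc s S)
    · intro x hx
      obtain ⟨d, hd, -⟩ := hd x hx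
      exact hd.continuousAt.continuousWithinAt
    · intro x hx
      obtain ⟨d, hd, -⟩ := hd x (interior_subset hx)
      exact hd.differentiableAt.differentiableWithinAt
    · intro x hx
      obtain ⟨d, hd, h0⟩ := hd x (interior_subset hx)
      rw [hd.deriv]; exact h0
  have h1 := hmono (Set.left_mem_Icc.2 hsS.le) (Set.right_mem_Icc.2 hsS.le) hsS.le
  have h2 : superSol m S S = 0 := by simp [superSol]
  have hS := hs.trans hsS
  have h3 : 0 ≤ D s := by
    have h4 := expTail_nonneg (m + 1 + 1) hs.le
    have h5 := expTail_nonneg (m + 1 + 1 + 1) hs.le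
    simp only [hD]; positivity
  have h4 : D S ≤ (Nat.factorial m : ℝ) *
      (Real.exp S / S ^ (m + 1) + c * (Real.exp S / S ^ (m + 1 + 1))) := by
    simp only [hD]
    have h5 := expTail_le_exp (m + 1 + 1) hS.le
    have h6 := expTail_le_exp (m + 1 + 1 + 1) hS.le
    gcongr
  have h7 : (Nat.factorial m : ℝ) *
      (Real.exp S / S ^ (m + 1) + c * (Real.exp S / S ^ (m + 1 + 1))) =
      (Nat.factorial m : ℝ) * Real.exp S / S ^ (m + 1) * (1 + c / S) := by
    field_simp
    ring
  simp only [h2] at h1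
  linarith

/-! ### Integration by parts for compactly supported functions -/

section IntegrationByParts

variable {R : ℝ} {u : ℝ → ℂ}

lemma integrable_of_vanish (hu : IsCptSmooth0R R u) {F : ℝ → ℝ}
    (hF : ContinuousOn F (Set.Ioo 0 R)) (h0 : ∀ r, r ∉ tsupport u → F r = 0) :
    Integrable F := by
  have hsub : tsupport F ⊆ tsupport u := by
    apply closure_minimal _ (isClosed_tsupport u)
    intro r hr
    by_contra h
    exact hr (h0 r h)
  exact (hF.continuous_of_tsupport_subset isOpen_Ioo
    (hsub.trans hu.2.2)).integrable_of_hasCompactSupport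
      (HasCompactSupport.of_support_subset_isCompact hu.2.1
        ((subset_tsupport F).trans hsub))

lemma deriv_eq_zero_of_notMem {r : ℝ} (hr : r ∉ tsupport u) : deriv u r = 0 := by
  by_contra h
  exact hr (support_deriv_subset h)

lemma IsCptSmooth0R.continuous_deriv (hu : IsCptSmooth0R R u) : Continuous (deriv u) :=
  hu.1.continuous_deriv (by simp)

lemma IsCptSmooth0R.hasDerivAt (hu : IsCptSmooth0R R u) (r : ℝ) : HasDerivAt u (deriv u r) r :=
  (hu.1.differentiable (by simp) r).hasDerivAt

lemma integrable_parts (hu : IsCptSmooth0R R u) {c c' : ℝ → ℝ}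
    (hc : ∀ r ∈ Set.Ioo 0 R, HasDerivAt c (c' r) r) (hc' : ContinuousOn c' (Set.Ioo 0 R)) :
    Integrable (fun r => 2 * inner ℝ (u r) (deriv u r) * c r + ‖u r‖ ^ 2 * c' r) := by
  have h1 := hu.1.continuous
  have h2 := hu.continuous_deriv
  have hcc : ContinuousOn c (Set.Ioo 0 R) := fun r hr => (hc r hr).continuousAt.continuousWithinAt
  apply integrable_of_vanish hu
  · have h3 : Continuous (fun r => 2 * inner ℝ (u r) (deriv u r)) :=
      continuous_const.mul (h1.inner h2)
    have h4 : Continuous (fun r => ‖u r‖ ^ 2) := by fun_prop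
    exact (h3.continuousOn.mul hcc).add (h4.continuousOn.mul hc')
  · intro r hr
    simp [image_eq_zero_of_notMem_tsupport hr]

lemma integral_parts (hu : IsCptSmooth0R R u) {c c' : ℝ → ℝ}
    (hc : ∀ r ∈ Set.Ioo 0 R, HasDerivAt c (c' r) r) (hc' : ContinuousOn c' (Set.Ioo 0 R)) :
    ∫ r in Set.Ioo 0 R, (2 * inner ℝ (u r) (deriv u r) * c r + ‖u r‖ ^ 2 * c' r) = 0 := by
  rw [setIntegral_eq_integral_of_forall_compl_eq_zero]
  · have hcc : ContinuousOn c (Set.Ioo 0 R) :=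
      fun r hr => (hc r hr).continuousAt.continuousWithinAt
    apply MeasureTheory.integral_eq_zero_of_hasDerivAt_of_integrable
      (f := fun r => ‖u r‖ ^ 2 * c r) _ (integrable_parts hu hc hc')
    · apply integrable_of_vanish hu
      · have h1 := hu.1.continuous
        have h4 : Continuous (fun r => ‖u r‖ ^ 2) := by fun_prop
        exact h4.continuousOn.mul hcc
      · intro r hr
        simp [image_eq_zero_of_notMem_tsupport hr]
    · intro r
      by_cases hr : r ∈ tsupport u
      · exact (hu.hasDerivAt r).norm_sq.mul (hc r (hu.2.2 hr))
      · have h0 : (fun r => ‖u r‖ ^ 2 * c r) =ᶠ[𝓝 r] fun _ => 0 := by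
          filter_upwards [(isClosed_tsupport u).isOpen_compl.mem_nhds hr] with x hx
          simp [image_eq_zero_of_notMem_tsupport hx]
        refine ((hasDerivAt_const r (0:ℝ)).congr_of_eventuallyEq h0).congr_deriv ?_
        simp [image_eq_zero_of_notMem_tsupport hr]
  · intro r hr
    have : r ∉ tsupport u := fun h => hr (hu.2.2 h)
    simp [image_eq_zero_of_notMem_tsupport this]

/-- The quadratic form with an arbitrary total derivative `(‖u‖² c)'` subtracted inside the
integral. -/
lemma qm_eq_integral (hu : IsCptSmooth0R R u) (B h : ℝ) (m : ℤ) {c c' : ℝ → ℝ}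
    (hc : ∀ r ∈ Set.Ioo 0 R, HasDerivAt c (c' r) r) (hc' : ContinuousOn c' (Set.Ioo 0 R)) :
    qm R B h m u = ∫ r in Set.Ioo 0 R,
      (h ^ 2 * ((‖deriv u r‖ ^ 2 + ((m : ℝ) / r - B * r / (2 * h)) ^ 2 * ‖u r‖ ^ 2) * r)
        - h * B * (‖u r‖ ^ 2 * r)
        - h ^ 2 * (2 * inner ℝ (u r) (deriv u r) * c r + ‖u r‖ ^ 2 * c' r)) := by
  have h1 := hu.1.continuous
  have h2 := hu.continuous_deriv
  have hi1 : Integrable (fun r : ℝ => (‖deriv u r‖ ^ 2 +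
      ((m : ℝ) / r - B * r / (2 * h)) ^ 2 * ‖u r‖ ^ 2) * r) := by
    apply integrable_of_vanish hu
    · have h3 : ContinuousOn (fun r : ℝ => (m : ℝ) / r - B * r / (2 * h)) (Set.Ioo 0 R) := by
        apply ContinuousOn.sub
        · exact continuousOn_const.div continuousOn_id fun r hr => hr.1.ne'
        · fun_prop
      have h4 : Continuous (fun r => ‖u r‖ ^ 2) := by fun_prop
      have h5 : Continuous (fun r => ‖deriv u r‖ ^ 2) := by fun_prop
      exact (h5.continuousOn.add ((h3.pow 2).mul h4.continuousOn)).mul continuousOn_id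
    · intro r hr
      simp [image_eq_zero_of_notMem_tsupport hr, deriv_eq_zero_of_notMem hr]
  have hi2 : Integrable (fun r : ℝ => ‖u r‖ ^ 2 * r) := by
    apply integrable_of_vanish hu
    · have : Continuous (fun r : ℝ => ‖u r‖ ^ 2 * r) := by fun_prop
      exact this.continuousOn
    · intro r hr
      simp [image_eq_zero_of_notMem_tsupport hr]
  have hi3 := integrable_parts hu hc hc'
  rw [integral_sub, integral_sub, integral_const_mul, integral_const_mul, integral_const_mul,
    integral_parts hu hc hc', qm]
  · ring
  · exact (hi1.const_mul _).integrableOn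
  · exact (hi2.const_mul _).integrableOn
  · exact ((hi1.const_mul _).sub (hi2.const_mul _)).integrableOn
  · exact (hi3.const_mul _).integrableOn

lemma norm_sub_smul_sq (z w : ℂ) (b : ℝ) :
    ‖w - b • z‖ ^ 2 = ‖w‖ ^ 2 - 2 * b * inner ℝ z w + b ^ 2 * ‖z‖ ^ 2 := by
  rw [norm_sub_sq_real, inner_smul_right, real_inner_comm, norm_smul, mul_pow, Real.norm_eq_abs,
    sq_abs]
  ring

/-- Completing the square: the form is the integral of the square of the annihilation operator. -/
lemma qm_eq_square (hu : IsCptSmooth0R R u) (B : ℝ) {h : ℝ} (hh : 0 < h) (m : ℤ) :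
    qm R B h m u = h ^ 2 * ∫ r in Set.Ioo 0 R,
      ‖deriv u r - ((m : ℝ) / r - B * r / (2 * h)) • u r‖ ^ 2 * r := by
  rw [qm_eq_integral hu B h m (c := fun r => m - B * r ^ 2 / (2 * h)) (c' := fun r => - B * r / h)]
  · rw [← integral_const_mul]
    apply setIntegral_congr_fun measurableSet_Ioo
    intro r hr
    have hr0 := hr.1.ne'
    simp only
    rw [norm_sub_smul_sq]
    field_simp
    ring
  · intro r _
    have := ((((hasDerivAt_pow 2 r).const_mul B).div_const (2 * h)).const_sub (m:ℝ))
    refine this.congr_deriv ?_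
    push_cast
    field_simp
  · fun_prop

/-- A Riccati-type lower bound: a real function `c = r b` satisfying the pointwise inequality
certifies `q_m ≥ Λ`, because `‖u' - b u‖² ≥ 0`. -/
lemma qm_lower (hu : IsCptSmooth0R R u) {B h Λ : ℝ} (m : ℤ) {c c' : ℝ → ℝ}
    (hc : ∀ r ∈ Set.Ioo 0 R, HasDerivAt c (c' r) r) (hc' : ContinuousOn c' (Set.Ioo 0 R))
    (hΛ : ∀ r ∈ Set.Ioo 0 R, (h * B + Λ) * r ≤
      h ^ 2 * (((m : ℝ) / r - B * r / (2 * h)) ^ 2 * r - c r ^ 2 / r - c' r)) :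
    Λ * ∫ r in Set.Ioo (0:ℝ) R, ‖u r‖ ^ 2 * r ≤ qm R B h m u := by
  have h1 := hu.1.continuous
  have h2 := hu.continuous_deriv
  rw [qm_eq_integral hu B h m hc hc', ← integral_const_mul]
  apply setIntegral_mono_on _ _ measurableSet_Ioo
  · intro r hr
    have hr0 := hr.1
    have h3 := mul_le_mul_of_nonneg_left (hΛ r hr) (sq_nonneg ‖u r‖)
    have h4 : 0 ≤ h ^ 2 * (‖deriv u r - (c r / r) • u r‖ ^ 2 * r) := by positivity
    rw [norm_sub_smul_sq] at h4
    have h5 : h ^ 2 * ((‖deriv u r‖ ^ 2 - 2 * (c r / r) * inner ℝ (u r) (deriv u r) +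
        (c r / r) ^ 2 * ‖u r‖ ^ 2) * r) = h ^ 2 * (‖deriv u r‖ ^ 2 * r -
        2 * c r * inner ℝ (u r) (deriv u r) + c r ^ 2 / r * ‖u r‖ ^ 2) := by
      field_simp
    rw [h5] at h4
    nlinarith
  · apply Integrable.integrableOn
    apply integrable_of_vanish hu
    · have : Continuous (fun r : ℝ => Λ * (‖u r‖ ^ 2 * r)) := by fun_prop
      exact this.continuousOn
    · intro r hr
      simp [image_eq_zero_of_notMem_tsupport hr]
  · apply Integrable.integrableOn
    apply integrable_of_vanish hu
    · have h3 : ContinuousOn (fun r : ℝ => (m : ℝ) / r - B * r / (2 * h)) (Set.Ioo 0 R) := by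
        apply ContinuousOn.sub
        · exact continuousOn_const.div continuousOn_id fun r hr => hr.1.ne'
        · fun_prop
      have h4 : Continuous (fun r => ‖u r‖ ^ 2) := by fun_prop
      have h5 : Continuous (fun r => ‖deriv u r‖ ^ 2) := by fun_prop
      have h6 : Continuous (fun r => h * B * (‖u r‖ ^ 2 * r)) := by fun_prop
      have h7 : Continuous (fun r => 2 * inner ℝ (u r) (deriv u r)) :=
        continuous_const.mul (h1.inner h2)
      have hcc : ContinuousOn c (Set.Ioo 0 R) :=
        fun r hr => (hc r hr).continuousAt.continuousWithinAt
      exact (((continuousOn_const.mul ((h5.continuousOn.add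
        ((h3.pow 2).mul h4.continuousOn)).mul continuousOn_id)).sub h6.continuousOn).sub
          (continuousOn_const.mul ((h7.continuousOn.mul hcc).add (h4.continuousOn.mul hc'))))
    · intro r hr
      simp [image_eq_zero_of_notMem_tsupport hr, deriv_eq_zero_of_notMem hr]

end IntegrationByParts

/-! ### The lower bound -/

/-- Applied with `b = (log (φ f))'`, where `φ = r^m e^{-Br²/(4h)}` is the zero mode and
`f` is the supersolution in the variable `s = Br²/(2h)`. -/
lemma qm_ge {R B h : ℝ} (hB : 0 < B) (hh : 0 < h) (m : ℕ) {u : ℝ → ℂ}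
    (hu : IsCptSmooth0R R u) {S K : ℝ} (hS : S = B * R ^ 2 / (2 * h))
    (hK : K = (Nat.factorial m : ℝ) * Real.exp S / S ^ (m + 1) *
      (1 + ((m : ℝ) + 1) * (m + 3) / S)) :
    2 * h * B / K * ∫ r in Set.Ioo (0:ℝ) R, ‖u r‖ ^ 2 * r ≤ qm R B h (m : ℤ) u := by
  set κ : ℝ := B / (2 * h) with hκ
  have hκ0 : 0 < κ := by positivity
  have hs : ∀ r ∈ Set.Ioo 0 R, 0 < κ * r ^ 2 ∧ κ * r ^ 2 < S := by
    intro r hr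
    have hr0 := hr.1
    refine ⟨by positivity, ?_⟩
    have : S = κ * R ^ 2 := by rw [hS, hκ]; ring
    rw [this]
    have hr1 := hr.2
    gcongr
  have hsq : ∀ r : ℝ, HasDerivAt (fun r => κ * r ^ 2) (2 * κ * r) r := by
    intro r
    refine ((hasDerivAt_pow 2 r).const_mul κ).congr_deriv ?_
    push_cast; ring
  -- `G` is `r` times the logarithmic derivative of `1 / f`, written in the variable `s`.
  set G : ℝ → ℝ := fun s => 2 * s * psi m s / superSol m S s with hG
  set G' : ℝ → ℝ := fun s => 2 * ((s - m) * psi m s + 1) / superSol m S s +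
    2 * s * psi m s ^ 2 / superSol m S s ^ 2 with hG'
  have hGd : ∀ s, 0 < s → s < S → HasDerivAt G (G' s) s := by
    intro s h0 h1
    have hf := (superSol_pos m h0 h1).ne'
    have h2 := (((hasDerivAt_id s).const_mul 2).mul (hasDerivAt_psi m h0)).div
      (hasDerivAt_superSol m h0 h1.le) hf
    refine h2.congr_deriv ?_
    simp only [hG', id]
    field_simp
    simp only [Pi.mul_apply]
    field_simp
    ring
  have hG'c : ContinuousOn G' (Set.Ioo 0 S) := by
    have h1 : ContinuousOn (psi m) (Set.Ioo 0 S) := (continuousOn_psi m).mono fun x hx => hx.1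
    have h2 : ContinuousOn (superSol m S) (Set.Ioo 0 S) := fun x hx =>
      (hasDerivAt_superSol m hx.1 hx.2.le).continuousAt.continuousWithinAt
    have h3 : ∀ x ∈ Set.Ioo 0 S, superSol m S x ≠ 0 := fun x hx => (superSol_pos m hx.1 hx.2).ne'
    have h4 : ContinuousOn (fun s : ℝ => s - m) (Set.Ioo 0 S) := by fun_prop
    have h5 : ContinuousOn (fun s : ℝ => 2 * s) (Set.Ioo 0 S) := by fun_prop
    exact ((continuousOn_const.mul ((h4.mul h1).add continuousOn_const)).div h2 h3).add
      ((h5.mul (h1.pow 2)).div (h2.pow 2) fun x hx => pow_ne_zero 2 (h3 x hx))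
  apply qm_lower hu (m : ℤ) (c := fun r => m - κ * r ^ 2 - G (κ * r ^ 2))
    (c' := fun r => -(2 * κ * r) - G' (κ * r ^ 2) * (2 * κ * r))
  · intro r hr
    obtain ⟨h0, h1⟩ := hs r hr
    have h2 := ((hsq r).const_sub (m : ℝ)).sub ((hGd _ h0 h1).comp r (hsq r))
    exact h2
  · have h1 : ContinuousOn (fun r : ℝ => κ * r ^ 2) (Set.Ioo 0 R) := by fun_prop
    have h2 : ContinuousOn (fun r : ℝ => 2 * κ * r) (Set.Ioo 0 R) := by fun_prop
    exact h2.neg.sub ((hG'c.comp h1 fun r hr => hs r hr).mul h2)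
  · intro r hr
    obtain ⟨h0, h1⟩ := hs r hr
    have hr0 := hr.1
    have hf := superSol_pos m h0 h1
    have hle := superSol_le m h0 h1
    rw [← hK] at hle
    have e1 : B = 2 * h * κ := by rw [hκ]; field_simp
    -- The Riccati expression collapses thanks to the equation satisfied by `ψ`.
    have e2 : h ^ 2 * ((((m : ℤ) : ℝ) / r - B * r / (2 * h)) ^ 2 * r
        - (m - κ * r ^ 2 - G (κ * r ^ 2)) ^ 2 / r
        - (-(2 * κ * r) - G' (κ * r ^ 2) * (2 * κ * r))) =
        (h * B + 2 * h * B / superSol m S (κ * r ^ 2)) * r := by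
      simp only [hG, hG']
      generalize superSol m S (κ * r ^ 2) = F at hf
      generalize psi m (κ * r ^ 2) = P
      rw [e1]
      push_cast
      field_simp
      ring
    rw [e2]
    gcongr

/-! ### Logarithmic cut-offs -/

/-- A smooth logarithmic cut-off: `0` for `ξ ≤ e^{-2N}` and `1` for `ξ ≥ e^{-N}`. -/
def logCut (N ξ : ℝ) : ℝ := if ξ ≤ 0 then 0 else Real.smoothTransition (2 + Real.log ξ / N)

lemma logCut_eq_zero {N ξ : ℝ} (hN : 0 < N) (hξ : ξ ≤ Real.exp (-(2 * N))) : logCut N ξ = 0 := by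
  unfold logCut
  split_ifs with h
  · rfl
  · apply Real.smoothTransition.zero_of_nonpos
    push Not at h
    have h1 := Real.log_le_log h hξ
    rw [Real.log_exp] at h1
    have h2 : Real.log ξ / N ≤ -2 := by
      rw [div_le_iff₀ hN]; linarith
    linarith

lemma logCut_nonneg (N ξ : ℝ) : 0 ≤ logCut N ξ := by
  unfold logCut
  split_ifs
  · exact le_rfl
  · exact Real.smoothTransition.nonneg _

lemma logCut_le_one (N ξ : ℝ) : logCut N ξ ≤ 1 := by
  unfold logCut
  split_ifs
  · exact zero_le_one
  · exact Real.smoothTransition.le_one _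

lemma logCut_eventuallyEq {N ξ : ℝ} (hξ : 0 < ξ) :
    logCut N =ᶠ[𝓝 ξ] fun x => Real.smoothTransition (2 + Real.log x / N) := by
  filter_upwards [lt_mem_nhds hξ] with x hx
  simp [logCut, not_le.2 hx]

lemma contDiff_logCut {N : ℝ} (hN : 0 < N) : ContDiff ℝ (⊤ : ℕ∞) (logCut N) := by
  rw [contDiff_iff_contDiffAt]
  intro ξ
  rcases lt_or_ge 0 ξ with h | h
  · refine ContDiffAt.congr_of_eventuallyEq ?_ (logCut_eventuallyEq h)
    exact Real.smoothTransition.contDiffAt.comp ξ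
      (contDiffAt_const.add ((Real.contDiffAt_log.2 h.ne').div_const N))
  · have h0 : logCut N =ᶠ[𝓝 ξ] fun _ => 0 := by
      filter_upwards [gt_mem_nhds (lt_of_le_of_lt h (Real.exp_pos (-(2 * N))))] with x hx
      exact logCut_eq_zero hN hx.le
    exact contDiffAt_const.congr_of_eventuallyEq h0

lemma exists_deriv_smoothTransition_bound :
    ∃ C : ℝ, 0 ≤ C ∧ ∀ x, |deriv Real.smoothTransition x| ≤ C := by
  have hc : Continuous (deriv Real.smoothTransition) :=
    (Real.smoothTransition.contDiff (n := 1)).continuous_deriv (by simp)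
  obtain ⟨C, hC⟩ := (isCompact_Icc (a := (0:ℝ)) (b := 1)).exists_bound_of_continuousOn
    hc.continuousOn
  have hC0 : 0 ≤ C := (norm_nonneg _).trans (hC 0 (by simp))
  refine ⟨C, hC0, fun x => ?_⟩
  rcases lt_or_ge x 0 with h | h
  · have h0 : Real.smoothTransition =ᶠ[𝓝 x] fun _ => 0 := by
      filter_upwards [gt_mem_nhds h] with y hy
      exact Real.smoothTransition.zero_of_nonpos hy.le
    rw [h0.deriv_eq]; simpa using hC0
  · rcases lt_or_ge 1 x with h1 | h1
    · have h0 : Real.smoothTransition =ᶠ[𝓝 x] fun _ => 1 := by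
        filter_upwards [lt_mem_nhds h1] with y hy
        exact Real.smoothTransition.one_of_one_le hy.le
      rw [h0.deriv_eq]; simpa using hC0
    · exact hC x ⟨h, h1⟩

/-- Cut-offs `logCut (n + 1) (r (R - r))` on `(0, R)`. The gradient bound `C / (n r (R - r))`
makes their energy, weighted by `r (R - r)²`, of order `1 / n`. -/
lemma exists_cutoff {R : ℝ} (hR : 0 < R) : ∃ χ : ℕ → ℝ → ℝ, ∃ C : ℝ, 0 ≤ C ∧
    (∀ n, ContDiff ℝ (⊤ : ℕ∞) (χ n)) ∧
    (∀ n, HasCompactSupport (χ n) ∧ tsupport (χ n) ⊆ Set.Ioo 0 R) ∧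
    (∀ n r, 0 ≤ χ n r ∧ χ n r ≤ 1) ∧
    (∀ r ∈ Set.Ioo 0 R, Tendsto (fun n => χ n r) atTop (𝓝 1)) ∧
    (∀ n : ℕ, ∀ r ∈ Set.Ioo 0 R, |deriv (χ n) r| ≤ C / (((n : ℝ) + 1) * (r * (R - r)))) ∧
    (∀ n : ℕ, ∀ r ∈ Set.Ioo 0 R, r ≤ Real.exp (-(2 * ((n : ℝ) + 1))) / R →
      deriv (χ n) r = 0) := by
  obtain ⟨C, hC0, hC⟩ := exists_deriv_smoothTransition_bound
  have hN : ∀ n : ℕ, (0:ℝ) < (n : ℝ) + 1 := fun n => by positivity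
  have hpoly : ContDiff ℝ (⊤ : ℕ∞) (fun r : ℝ => r * (R - r)) := by fun_prop
  have hξpos : ∀ r ∈ Set.Ioo 0 R, 0 < r * (R - r) := fun r hr =>
    mul_pos hr.1 (sub_pos.2 hr.2)
  have hξd : ∀ r : ℝ, HasDerivAt (fun r : ℝ => r * (R - r)) (R - 2 * r) r := by
    intro r
    refine ((hasDerivAt_id r).mul ((hasDerivAt_id r).const_sub R)).congr_deriv ?_
    simp only [id]; ring
  refine ⟨fun n r => logCut (n + 1) (r * (R - r)), C * R, by positivity, ?_, ?_, ?_, ?_, ?_, ?_⟩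
  · exact fun n => (contDiff_logCut (hN n)).comp hpoly
  · intro n
    set K : Set ℝ := {r | Real.exp (-(2 * ((n : ℝ) + 1))) ≤ r * (R - r)} with hK
    have hKsub : K ⊆ Set.Ioo 0 R := by
      intro r hr
      have h1 : 0 < r * (R - r) := lt_of_lt_of_le (Real.exp_pos _) hr
      constructor
      · by_contra h
        push Not at h
        nlinarith
      · by_contra h
        push Not at h
        nlinarith
    have hKclosed : IsClosed K := isClosed_le continuous_const hpoly.continuous
    have hKc : IsCompact K := isCompact_Icc.of_isClosed_subset hKclosed
      (hKsub.trans Set.Ioo_subset_Icc_self)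
    have hsupp : Function.support (fun r => logCut ((n : ℝ) + 1) (r * (R - r))) ⊆ K := by
      intro r hr
      by_contra h
      simp only [hK, Set.mem_ofPred_eq, not_le] at h
      exact hr (logCut_eq_zero (hN n) h.le)
    exact ⟨HasCompactSupport.of_support_subset_isCompact hKc hsupp,
      (closure_minimal hsupp hKclosed).trans hKsub⟩
  · exact fun n r => ⟨logCut_nonneg _ _, logCut_le_one _ _⟩
  · intro r hr
    have hξ := hξpos r hr
    apply tendsto_const_nhds.congr'
    obtain ⟨n₀, hn₀⟩ := exists_nat_ge (-Real.log (r * (R - r)))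
    filter_upwards [eventually_ge_atTop n₀] with n hn
    have hn' : (n₀ : ℝ) ≤ n := by exact_mod_cast hn
    symm
    unfold logCut
    rw [if_neg (not_le.2 hξ)]
    apply Real.smoothTransition.one_of_one_le
    have : -1 ≤ Real.log (r * (R - r)) / ((n : ℝ) + 1) := by
      rw [le_div_iff₀ (hN n)]; linarith
    linarith
  · intro n r hr
    have hξ := hξpos r hr
    have h1 : HasDerivAt (fun x => Real.smoothTransition (2 + Real.log x / ((n : ℝ) + 1)))
        (deriv Real.smoothTransition (2 + Real.log (r * (R - r)) / ((n : ℝ) + 1)) *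
          ((r * (R - r))⁻¹ / ((n : ℝ) + 1))) (r * (R - r)) := by
      have h2 := ((Real.hasDerivAt_log hξ.ne').div_const ((n : ℝ) + 1)).const_add 2
      have h3 := ((Real.smoothTransition.contDiff (n := 1)).differentiable (by simp)
        (2 + Real.log (r * (R - r)) / ((n : ℝ) + 1))).hasDerivAt
      exact h3.comp (r * (R - r)) h2
    have h4 := HasDerivAt.comp (h₂ := logCut ((n : ℝ) + 1)) r
      (h1.congr_of_eventuallyEq (logCut_eventuallyEq hξ)) (hξd r)
    change |deriv (logCut ((n : ℝ) + 1) ∘ fun r => r * (R - r)) r| ≤ _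
    rw [h4.deriv, abs_mul, abs_mul]
    have h5 : |R - 2 * r| ≤ R := by
      rw [abs_le]; constructor <;> linarith [hr.1, hr.2]
    have h6 : |(r * (R - r))⁻¹ / ((n : ℝ) + 1)| = (r * (R - r))⁻¹ / ((n : ℝ) + 1) :=
      abs_of_nonneg (by have := hN n; positivity)
    rw [h6]
    have hn := hN n
    calc _ ≤ C * ((r * (R - r))⁻¹ / ((n : ℝ) + 1)) * R := by
          gcongr
          exact hC _
      _ = _ := by
          field_simp
  · intro n r hr hle
    have hpow : r * (R - r) < Real.exp (-(2 * ((n : ℝ) + 1))) := by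
      rw [le_div_iff₀ hR] at hle
      nlinarith [hr.1, hr.2]
    have h0 : (fun r => logCut ((n : ℝ) + 1) (r * (R - r))) =ᶠ[𝓝 r] fun _ => 0 := by
      filter_upwards [hpoly.continuous.continuousAt.eventually (gt_mem_nhds hpow)] with x hx
      exact logCut_eq_zero (hN n) hx.le
    rw [h0.deriv_eq]; simp

/-! ### The upper bound -/

/-- The zero mode `r^m e^{-Br²/(4h)}`. -/
def zeroMode (B h : ℝ) (m : ℕ) (r : ℝ) : ℝ := r ^ m * Real.exp (-(B * r ^ 2 / (4 * h)))

lemma contDiff_zeroMode (B h : ℝ) (m : ℕ) : ContDiff ℝ (⊤ : ℕ∞) (zeroMode B h m) := by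
  unfold zeroMode; fun_prop

lemma hasDerivAt_zeroMode (B : ℝ) {h : ℝ} (hh : 0 < h) (m : ℕ) {r : ℝ} (hr : 0 < r) :
    HasDerivAt (zeroMode B h m) (((m : ℝ) / r - B * r / (2 * h)) * zeroMode B h m r) r := by
  have h1 := (((hasDerivAt_pow 2 r).const_mul B).div_const (4 * h)).neg.exp
  refine ((hasDerivAt_pow m r).mul h1).congr_deriv ?_
  unfold zeroMode
  rcases m with _ | m
  · simp
    field_simp
    ring
  · simp only [Pi.neg_apply]
    push_cast
    field_simp
    ring

lemma zeroMode_sq (B h : ℝ) (m : ℕ) (r : ℝ) :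
    zeroMode B h m r ^ 2 = r ^ (2 * m) * Real.exp (-(B * r ^ 2 / (2 * h))) := by
  unfold zeroMode
  rw [mul_pow, ← pow_mul, mul_comm m 2, ← Real.exp_nat_mul]
  congr 2
  push_cast
  rcases eq_or_ne h 0 with rfl | h0
  · simp
  · field_simp
    ring

lemma qm_nonneg {R B h : ℝ} (hh : 0 < h) (m : ℤ) {u : ℝ → ℂ}
    (hu : IsCptSmooth0R R u) : 0 ≤ qm R B h m u := by
  rw [qm_eq_square hu B hh m]
  apply mul_nonneg (by positivity)
  apply setIntegral_nonneg measurableSet_Ioo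
  intro r hr
  have := hr.1
  positivity

lemma integral_norm_nonneg (R : ℝ) (u : ℝ → ℂ) :
    0 ≤ ∫ r in Set.Ioo (0:ℝ) R, ‖u r‖ ^ 2 * r := by
  apply setIntegral_nonneg measurableSet_Ioo
  intro r hr
  have := hr.1
  positivity

lemma mum_mul_le {R B h : ℝ} (hh : 0 < h) (m : ℤ) {u : ℝ → ℂ}
    (hu : IsCptSmooth0R R u) :
    mum R B h m * ∫ r in Set.Ioo (0:ℝ) R, ‖u r‖ ^ 2 * r ≤ qm R B h m u := by
  rcases (integral_norm_nonneg R u).eq_or_lt with h0 | h0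
  · rw [← h0, mul_zero]; exact qm_nonneg hh m hu
  · rw [← le_div_iff₀ h0]
    apply csInf_le
    · refine ⟨0, ?_⟩
      rintro c ⟨v, hv, -, rfl⟩
      exact div_nonneg (qm_nonneg hh m hv) (integral_norm_nonneg R v)
    · refine ⟨u, hu, ?_, rfl⟩
      rintro rfl
      simp at h0

lemma integrableOn_Ioo_of_continuous {R : ℝ} {F : ℝ → ℝ} (hF : Continuous F) :
    IntegrableOn F (Set.Ioo 0 R) :=
  (hF.continuousOn.integrableOn_Icc).mono_set Set.Ioo_subset_Icc_self

/-- Variational upper bound with trial function `u = φ v`, `φ` the zero mode: there the form is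
`h² ∫ |v'|² φ² r dr`. -/
lemma qm_zeroMode_mul {R B h : ℝ} (hh : 0 < h) (m : ℕ) {v : ℝ → ℝ}
    (hv : ContDiff ℝ (⊤ : ℕ∞) v) (hc : HasCompactSupport v) (hs : tsupport v ⊆ Set.Ioo 0 R) :
    mum R B h m * ∫ r in Set.Ioo (0:ℝ) R, v r ^ 2 * (zeroMode B h m r ^ 2 * r) ≤
      h ^ 2 * ∫ r in Set.Ioo (0:ℝ) R, deriv v r ^ 2 * (zeroMode B h m r ^ 2 * r) := by
  set u : ℝ → ℂ := fun r => ((zeroMode B h m r * v r : ℝ) : ℂ) with hu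
  have hsub : Function.support u ⊆ Function.support v := by
    intro r hr h0
    apply hr
    simp [hu, h0]
  have hus : IsCptSmooth0R R u := by
    refine ⟨?_, hc.mono hsub, (closure_mono hsub).trans hs⟩
    exact Complex.ofRealCLM.contDiff.comp ((contDiff_zeroMode B h m).mul hv)
  have h1 := mum_mul_le (B := B) hh m hus
  rw [qm_eq_square hus B hh] at h1
  convert h1 using 2
  · congr 1
    funext r
    simp only [hu, Complex.norm_real, Real.norm_eq_abs, sq_abs]
    ring
  · apply setIntegral_congr_fun measurableSet_Ioo
    intro r hr
    have h2 : HasDerivAt u _ r := (((hasDerivAt_zeroMode B hh m hr.1).mul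
      (hv.differentiable (by simp) r).hasDerivAt)).ofReal_comp
    simp only
    rw [h2.deriv]
    rw [show ((((m : ℤ) : ℝ) / r - B * r / (2 * h)) • u r : ℂ) =
      (((((m : ℤ) : ℝ) / r - B * r / (2 * h)) * (zeroMode B h m r * v r) : ℝ) : ℂ) by
        simp [hu], ← Complex.ofReal_sub, Complex.norm_real, Real.norm_eq_abs, sq_abs]
    push_cast
    ring

/-- Trial functions `φ w` need not have compact support in `(0, R)`: it is enough that `w`
vanishes linearly at `R`. The logarithmic cut-off at `0` is what makes this true for `m = 0`.
The factor `1 + t` absorbs the cross term produced by the cut-off. -/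
lemma mum_mul_le_trial {R B h : ℝ} (hR : 0 < R) (hB : 0 < B) (hh : 0 < h) (m : ℕ) {w : ℝ → ℝ}
    (hw : ContDiff ℝ (⊤ : ℕ∞) w) {A : ℝ} (hA : ∀ r ∈ Set.Ioo 0 R, |w r| ≤ A * (R - r))
    {t : ℝ} (ht : 0 < t) :
    mum R B h m * ∫ r in Set.Ioo (0:ℝ) R, w r ^ 2 * (zeroMode B h m r ^ 2 * r) ≤
      h ^ 2 * ((1 + t) *
        ∫ r in Set.Ioo (0:ℝ) R, deriv w r ^ 2 * (zeroMode B h m r ^ 2 * r)) := by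
  obtain ⟨χ, C, hC0, hχ, hχs, hχ01, hχ1, hχd, hχ0⟩ := exists_cutoff hR
  set φ := zeroMode B h m with hφdef
  have hφ : Continuous φ := (contDiff_zeroMode B h m).continuous
  have hwc : Continuous w := hw.continuous
  have hw'c : Continuous (deriv w) := hw.continuous_deriv (by simp)
  have hχc : ∀ n, Continuous (χ n) := fun n => (hχ n).continuous
  have hχ'c : ∀ n, Continuous (deriv (χ n)) := fun n => (hχ n).continuous_deriv (by simp)
  have hφle : ∀ r ∈ Set.Ioo 0 R, φ r ^ 2 ≤ R ^ (2 * m) := by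
    intro r hr
    have hr0 := hr.1
    rw [hφdef, zeroMode_sq]
    have h1 : Real.exp (-(B * r ^ 2 / (2 * h))) ≤ 1 := by
      apply Real.exp_le_one_iff.2
      have : 0 ≤ B * r ^ 2 / (2 * h) := by positivity
      linarith
    calc _ ≤ r ^ (2 * m) * 1 := by gcongr
      _ ≤ _ := by rw [mul_one]; exact pow_le_pow_left₀ hr0.le hr.2.le _
  set M : ℝ := A ^ 2 * C ^ 2 * R ^ (2 * m) with hM
  have hM0 : 0 ≤ M := by positivity
  -- The energy of the cut-off.
  have hcut : ∀ n : ℕ, Real.exp (-(2 * ((n : ℝ) + 1))) / R < R →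
      ∫ r in Set.Ioo (0:ℝ) R, (w r * deriv (χ n) r) ^ 2 * (φ r ^ 2 * r) ≤
        M / ((n : ℝ) + 1) ^ 2 * (Real.log (R ^ 2) + 2 * ((n : ℝ) + 1)) := by
    intro n hn
    set α := Real.exp (-(2 * ((n : ℝ) + 1))) / R with hα
    have hα0 : 0 < α := by positivity
    have hsubset : Set.Ioo α R ⊆ Set.Ioo 0 R := Set.Ioo_subset_Ioo_left hα0.le
    have e1 : ∫ r in Set.Ioo (0:ℝ) R, (w r * deriv (χ n) r) ^ 2 * (φ r ^ 2 * r) =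
        ∫ r in Set.Ioo α R, (w r * deriv (χ n) r) ^ 2 * (φ r ^ 2 * r) := by
      apply setIntegral_eq_of_subset_of_forall_sdiff_eq_zero measurableSet_Ioo hsubset
      intro r hr
      have : r ≤ α := by
        by_contra h
        push Not at h
        exact hr.2 ⟨h, hr.1.2⟩
      rw [hχ0 n r hr.1 this]; simp
    have e2 : ∫ r in Set.Ioo α R, M / ((n : ℝ) + 1) ^ 2 * (1 / r) =
        M / ((n : ℝ) + 1) ^ 2 * (Real.log (R ^ 2) + 2 * ((n : ℝ) + 1)) := by
      rw [integral_const_mul, ← integral_Ioc_eq_integral_Ioo,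
        ← intervalIntegral.integral_of_le hn.le, integral_one_div_of_pos hα0 hR]
      congr 1
      rw [hα, div_div_eq_mul_div, Real.log_div (by positivity) (Real.exp_ne_zero _), Real.log_exp,
        pow_two]
      ring
    rw [e1, ← e2]
    apply setIntegral_mono_on _ _ measurableSet_Ioo
    · intro r hr
      have hr' := hsubset hr
      have hr0 := hr'.1
      have hRr : 0 < R - r := sub_pos.2 hr'.2
      have h1 : |w r * deriv (χ n) r| ≤ A * C / (((n : ℝ) + 1) * r) := by
        rw [abs_mul]
        calc _ ≤ (A * (R - r)) * (C / (((n : ℝ) + 1) * (r * (R - r)))) := by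
              apply mul_le_mul (hA r hr') (hχd n r hr') (abs_nonneg _)
              exact (abs_nonneg _).trans (hA r hr')
          _ = _ := by field_simp
      have h2 : (w r * deriv (χ n) r) ^ 2 ≤ (A * C / (((n : ℝ) + 1) * r)) ^ 2 := by
        rw [← sq_abs]; gcongr
      calc _ ≤ (A * C / (((n : ℝ) + 1) * r)) ^ 2 * (R ^ (2 * m) * r) := by
            have := hφle r hr'
            gcongr
        _ = _ := by rw [hM]; field_simp
    · apply IntegrableOn.mono_set _ hsubset
      apply integrableOn_Ioo_of_continuous
      have := hχ'c n
      fun_prop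
    · have : ContinuousOn (fun r : ℝ => M / ((n : ℝ) + 1) ^ 2 * (1 / r)) (Set.Icc α R) := by
        apply continuousOn_const.mul
        exact continuousOn_const.div continuousOn_id fun r hr => (lt_of_lt_of_le hα0 hr.1).ne'
      exact this.integrableOn_Icc.mono_set Set.Ioo_subset_Icc_self
  have hlim0 : Tendsto (fun n : ℕ => (n : ℝ) + 1) atTop atTop :=
    tendsto_atTop_add_const_right _ _ tendsto_natCast_atTop_atTop
  have hev : ∀ᶠ n : ℕ in atTop, Real.exp (-(2 * ((n : ℝ) + 1))) / R < R := by
    have h1 : Tendsto (fun n : ℕ => Real.exp (-(2 * ((n : ℝ) + 1))) / R) atTop (𝓝 (0 / R)) := by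
      apply Tendsto.div_const
      apply Real.tendsto_exp_atBot.comp
      apply tendsto_neg_atTop_atBot.comp
      exact hlim0.const_mul_atTop two_pos
    rw [zero_div] at h1
    exact h1.eventually (gt_mem_nhds hR)
  have hlima : Tendsto (fun n : ℕ =>
      M / ((n : ℝ) + 1) ^ 2 * (Real.log (R ^ 2) + 2 * ((n : ℝ) + 1))) atTop (𝓝 0) := by
    have h1 : Tendsto (fun n : ℕ => ((n : ℝ) + 1)⁻¹) atTop (𝓝 0) :=
      tendsto_inv_atTop_zero.comp hlim0
    have h2 := ((h1.pow 2).const_mul (M * Real.log (R ^ 2))).add (h1.const_mul (2 * M))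
    rw [zero_pow two_ne_zero, mul_zero, mul_zero, add_zero] at h2
    refine h2.congr fun n => ?_
    have : (n : ℝ) + 1 ≠ 0 := by positivity
    field_simp
  have hlimN : Tendsto (fun n => ∫ r in Set.Ioo (0:ℝ) R, (w r * χ n r) ^ 2 * (φ r ^ 2 * r)) atTop
      (𝓝 (∫ r in Set.Ioo (0:ℝ) R, w r ^ 2 * (φ r ^ 2 * r))) := by
    apply MeasureTheory.tendsto_integral_of_dominated_convergence
      (fun r => w r ^ 2 * (φ r ^ 2 * r))
    · intro n
      have := hχc n
      exact Continuous.aestronglyMeasurable (by fun_prop)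
    · exact integrableOn_Ioo_of_continuous (by fun_prop)
    · intro n
      filter_upwards [ae_restrict_mem measurableSet_Ioo] with r hr
      have hr0 := hr.1
      obtain ⟨h0, h1⟩ := hχ01 n r
      rw [Real.norm_eq_abs, abs_of_nonneg (by positivity), mul_pow]
      have : χ n r ^ 2 ≤ 1 := pow_le_one₀ h0 h1
      have h2 : w r ^ 2 * χ n r ^ 2 ≤ w r ^ 2 * 1 := by gcongr
      rw [mul_one] at h2
      gcongr
    · filter_upwards [ae_restrict_mem measurableSet_Ioo] with r hr
      have := (((hχ1 r hr).const_mul (w r)).pow 2).mul_const (φ r ^ 2 * r)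
      simpa using this
  have hmain : ∀ᶠ n : ℕ in atTop,
      mum R B h m * ∫ r in Set.Ioo (0:ℝ) R, (w r * χ n r) ^ 2 * (φ r ^ 2 * r) ≤
      h ^ 2 * ((1 + t) * (∫ r in Set.Ioo (0:ℝ) R, deriv w r ^ 2 * (φ r ^ 2 * r)) +
        (1 + 1 / t) * (M / ((n : ℝ) + 1) ^ 2 * (Real.log (R ^ 2) + 2 * ((n : ℝ) + 1)))) := by
    filter_upwards [hev] with n hn
    have h1 := qm_zeroMode_mul (R := R) (B := B) hh m (hw.mul (hχ n))
      ((hχs n).1.mul_left) ((closure_mono (Function.support_mul_subset_right _ _)).trans (hχs n).2)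
    refine h1.trans ?_
    have hχcn := hχc n
    have hχ'cn := hχ'c n
    apply mul_le_mul_of_nonneg_left _ (sq_nonneg h)
    refine le_trans ?_ (add_le_add_right (mul_le_mul_of_nonneg_left (hcut n hn)
      (by positivity : (0:ℝ) ≤ 1 + 1 / t)) _)
    rw [← integral_const_mul, ← integral_const_mul, ← integral_add]
    · apply setIntegral_mono_on _ _ measurableSet_Ioo
      · intro r hr
        have hr0 := hr.1
        have h2 : deriv (fun x => w x * χ n x) r = deriv w r * χ n r + w r * deriv (χ n) r :=
          ((hw.differentiable (by simp) r).hasDerivAt.mul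
            ((hχ n).differentiable (by simp) r).hasDerivAt).deriv
        obtain ⟨h3, h4⟩ := hχ01 n r
        have h5 : (deriv w r * χ n r) ^ 2 ≤ deriv w r ^ 2 := by
          rw [mul_pow]
          exact mul_le_of_le_one_right (sq_nonneg _) (pow_le_one₀ h3 h4)
        -- Young's inequality `(x + y)² ≤ (1 + t) x² + (1 + 1/t) y²`.
        have h6 : ∀ x y : ℝ, (x + y) ^ 2 ≤ (1 + t) * x ^ 2 + (1 + 1 / t) * y ^ 2 := by
          intro x y
          have : (1 + t) * x ^ 2 + (1 + 1 / t) * y ^ 2 - (x + y) ^ 2 = (t * x - y) ^ 2 / t := by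
            field_simp
            ring
          have h7 : 0 ≤ (t * x - y) ^ 2 / t := by positivity
          linarith
        have h8 : deriv (fun x => w x * χ n x) r ^ 2 ≤ (1 + t) * deriv w r ^ 2 +
            (1 + 1 / t) * (w r * deriv (χ n) r) ^ 2 := by
          rw [h2]
          refine (h6 _ _).trans ?_
          gcongr
        calc _ ≤ ((1 + t) * deriv w r ^ 2 +
            (1 + 1 / t) * (w r * deriv (χ n) r) ^ 2) * (φ r ^ 2 * r) := by gcongr
          _ = _ := by ring
      · apply integrableOn_Ioo_of_continuous
        have : Continuous (deriv (fun x => w x * χ n x)) := (hw.mul (hχ n)).continuous_deriv (by simp)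
        exact (this.pow 2).mul ((hφ.pow 2).mul continuous_id)
      · apply integrableOn_Ioo_of_continuous
        fun_prop
    · exact integrableOn_Ioo_of_continuous (by fun_prop)
    · exact integrableOn_Ioo_of_continuous (by fun_prop)
  have hL := hlimN.const_mul (mum R B h m)
  have hRt := ((hlima.const_mul (1 + 1 / t)).const_add
    ((1 + t) * (∫ r in Set.Ioo (0:ℝ) R, deriv w r ^ 2 * (φ r ^ 2 * r)))).const_mul (h ^ 2)
  rw [mul_zero, add_zero] at hRt
  exact le_of_tendsto_of_tendsto hL hRt hmain

section Trial

variable {κ R : ℝ} (m : ℕ)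

lemma integral_Ioo_of_hasDerivAt (hR : 0 < R) {F F' : ℝ → ℝ} (hF : ∀ r, HasDerivAt F (F' r) r)
    (hF' : Continuous F') : ∫ r in Set.Ioo (0:ℝ) R, F' r = F R - F 0 := by
  rw [← integral_Ioc_eq_integral_Ioo, ← intervalIntegral.integral_of_le hR.le]
  exact intervalIntegral.integral_eq_sub_of_hasDerivAt (fun x _ => hF x)
    (hF'.intervalIntegrable _ _)

lemma hasDerivAt_mul_sq (κ r : ℝ) : HasDerivAt (fun r => κ * r ^ 2) (2 * κ * r) r := by
  refine ((hasDerivAt_pow 2 r).const_mul κ).congr_deriv ?_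
  push_cast; ring

/-- Energy of the trial function `w = 1 - e^{κ(r² - R²)}`. -/
lemma trial_energy_le (hκ : 0 < κ) (hR : 0 < R) :
    ∫ r in Set.Ioo (0:ℝ) R, (-(Real.exp (κ * r ^ 2 - κ * R ^ 2) * (2 * κ * r))) ^ 2 *
      (r ^ (2 * m) * Real.exp (-(κ * r ^ 2)) * r) ≤
    2 * κ * R ^ (2 * m + 2) * Real.exp (-(κ * R ^ 2)) := by
  set c : ℝ := 4 * κ ^ 2 * R ^ (2 * m + 2) * Real.exp (-(2 * (κ * R ^ 2))) with hc
  have h1 : ∫ r in Set.Ioo (0:ℝ) R, c * (Real.exp (κ * r ^ 2) * r) =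
      c * (Real.exp (κ * R ^ 2) / (2 * κ)) - c * (Real.exp (κ * 0 ^ 2) / (2 * κ)) := by
    apply integral_Ioo_of_hasDerivAt (F := fun r => c * (Real.exp (κ * r ^ 2) / (2 * κ))) hR
    · intro r
      refine (((hasDerivAt_mul_sq κ r).exp.div_const (2 * κ)).const_mul c).congr_deriv ?_
      field_simp
    · fun_prop
  have h2 : ∫ r in Set.Ioo (0:ℝ) R, (-(Real.exp (κ * r ^ 2 - κ * R ^ 2) * (2 * κ * r))) ^ 2 *
      (r ^ (2 * m) * Real.exp (-(κ * r ^ 2)) * r) ≤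
      ∫ r in Set.Ioo (0:ℝ) R, c * (Real.exp (κ * r ^ 2) * r) := by
    apply setIntegral_mono_on (integrableOn_Ioo_of_continuous (by fun_prop))
      (integrableOn_Ioo_of_continuous (by fun_prop)) measurableSet_Ioo
    intro r hr
    have hr0 := hr.1
    have e1 : Real.exp (κ * r ^ 2 - κ * R ^ 2) ^ 2 * Real.exp (-(κ * r ^ 2)) =
        Real.exp (-(2 * (κ * R ^ 2))) * Real.exp (κ * r ^ 2) := by
      rw [← Real.exp_nat_mul, ← Real.exp_add, ← Real.exp_add]
      congr 1
      push_cast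
      ring
    calc _ = 4 * κ ^ 2 * r ^ (2 * m + 2) *
          (Real.exp (κ * r ^ 2 - κ * R ^ 2) ^ 2 * Real.exp (-(κ * r ^ 2))) * r := by ring
      _ = 4 * κ ^ 2 * r ^ (2 * m + 2) * Real.exp (-(2 * (κ * R ^ 2))) *
          (Real.exp (κ * r ^ 2) * r) := by rw [e1]; ring
      _ ≤ _ := by
          rw [hc]
          have := hr.2.le
          gcongr
  refine h2.trans ?_
  rw [h1]
  have h3 : 0 ≤ c * (Real.exp (κ * 0 ^ 2) / (2 * κ)) := by positivity
  have h4 : c * (Real.exp (κ * R ^ 2) / (2 * κ)) =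
      2 * κ * R ^ (2 * m + 2) * Real.exp (-(κ * R ^ 2)) := by
    have e1 : Real.exp (-(2 * (κ * R ^ 2))) * Real.exp (κ * R ^ 2) =
        Real.exp (-(κ * R ^ 2)) := by
      rw [← Real.exp_add]; congr 1; ring
    rw [← e1, hc]
    field_simp
    ring
  linarith

/-- Norm of the trial function, from `w² ≥ 1 - 2 e^{κ(r² - R²)}`. -/
lemma le_trial_norm (hκ : 0 < κ) (hR : 0 < R) :
    (Nat.factorial m : ℝ) / (2 * κ ^ (m + 1)) * (Real.exp (-(κ * R ^ 2)) *
        (expTail (m + 1) (κ * R ^ 2) - 2 * (κ * R ^ 2) ^ (m + 1) / (Nat.factorial (m + 1) : ℝ))) ≤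
    ∫ r in Set.Ioo (0:ℝ) R, (1 - Real.exp (κ * r ^ 2 - κ * R ^ 2)) ^ 2 *
      (r ^ (2 * m) * Real.exp (-(κ * r ^ 2)) * r) := by
  set F : ℝ → ℝ := fun r => (Nat.factorial m : ℝ) / (2 * κ ^ (m + 1)) *
    (Real.exp (-(κ * r ^ 2)) * expTail (m + 1) (κ * r ^ 2)) -
      Real.exp (-(κ * R ^ 2)) * r ^ (2 * m + 2) / (m + 1) with hF
  have hfac := Nat.factorial_pos m
  have h1 : ∫ r in Set.Ioo (0:ℝ) R, (Real.exp (-(κ * r ^ 2)) - 2 * Real.exp (-(κ * R ^ 2))) *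
      r ^ (2 * m + 1) = F R - F 0 := by
    apply integral_Ioo_of_hasDerivAt hR
    · intro r
      have d1 := (hasDerivAt_mul_sq κ r).neg.exp
      have d2 := HasDerivAt.comp r (hasDerivAt_expTail m (κ * r ^ 2)) (hasDerivAt_mul_sq κ r)
      have d3 := ((hasDerivAt_pow (2 * m + 2) r).const_mul
        (Real.exp (-(κ * R ^ 2)))).div_const ((m : ℝ) + 1)
      refine (((d1.mul d2).const_mul ((Nat.factorial m : ℝ) / (2 * κ ^ (m + 1)))).sub
        d3).congr_deriv ?_
      simp only [Function.comp_apply, Pi.neg_apply]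
      rw [expTail_succ m (κ * r ^ 2)]
      push_cast
      simp only [mul_pow, ← pow_mul]
      field_simp
      ring
    · fun_prop
  have h2 : F R - F 0 = (Nat.factorial m : ℝ) / (2 * κ ^ (m + 1)) * (Real.exp (-(κ * R ^ 2)) *
        (expTail (m + 1) (κ * R ^ 2) -
          2 * (κ * R ^ 2) ^ (m + 1) / (Nat.factorial (m + 1) : ℝ))) := by
    have h3 : F 0 = 0 := by simp [hF, expTail_succ_zero]
    rw [h3, hF, Nat.factorial_succ]
    push_cast
    simp only [mul_pow, ← pow_mul]
    field_simp
    ring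
  rw [← h2, ← h1]
  apply setIntegral_mono_on (integrableOn_Ioo_of_continuous (by fun_prop))
    (integrableOn_Ioo_of_continuous (by fun_prop)) measurableSet_Ioo
  intro r hr
  have hr0 := hr.1
  have e1 : Real.exp (-(κ * R ^ 2)) =
      Real.exp (κ * r ^ 2 - κ * R ^ 2) * Real.exp (-(κ * r ^ 2)) := by
    rw [← Real.exp_add]; congr 1; ring
  rw [e1]
  calc _ = (1 - 2 * Real.exp (κ * r ^ 2 - κ * R ^ 2)) *
        (r ^ (2 * m) * Real.exp (-(κ * r ^ 2)) * r) := by ring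
    _ ≤ _ := by
      gcongr
      nlinarith [sq_nonneg (Real.exp (κ * r ^ 2 - κ * R ^ 2))]

end Trial

lemma exp_neg_mul_pow_le {S : ℝ} (hS : 0 < S) (k : ℕ) :
    Real.exp (-S) * (S ^ k / (Nat.factorial k : ℝ)) ≤ ((k : ℝ) + 1) / S := by
  have h1 := Real.pow_div_factorial_le_exp S hS.le (k + 1)
  rw [Nat.factorial_succ, pow_succ] at h1
  push_cast at h1
  have hfac := Nat.factorial_pos k
  rw [Real.exp_neg, inv_mul_le_iff₀ (Real.exp_pos S)]
  calc S ^ k / (Nat.factorial k : ℝ) =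
      S ^ k * S / (((k : ℝ) + 1) * (Nat.factorial k : ℝ)) * (((k : ℝ) + 1) / S) := by field_simp
    _ ≤ _ := by gcongr

/-- Upper bound on the bottom, with relative error of order `h + 1/S`. -/
lemma mum_upper {R B h : ℝ} (hR : 0 < R) (hB : 0 < B) (hh : 0 < h) (hh1 : h ≤ 1) (m : ℕ)
    {S X : ℝ} (hS : S = B * R ^ 2 / (2 * h))
    (hX : X = ∑ k ∈ Finset.range (m + 1), ((k : ℝ) + 1) + 2 * ((m : ℝ) + 2)) (hXS : X / S ≤ 1 / 2)
    (hμ : 0 ≤ mum R B h m) :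
    mum R B h m ≤ 2 * h * B * S ^ (m + 1) / (Nat.factorial m) * Real.exp (-S) *
      (1 + (h + 4 * (X / S))) := by
  set κ : ℝ := B / (2 * h) with hκ
  have hκ0 : 0 < κ := by positivity
  have hSκ : κ * R ^ 2 = S := by rw [hS, hκ]; ring
  have hS0 : 0 < S := by rw [← hSκ]; positivity
  have hfac : (0:ℝ) < Nat.factorial m := by exact_mod_cast Nat.factorial_pos m
  set w : ℝ → ℝ := fun r => 1 - Real.exp (κ * r ^ 2 - κ * R ^ 2) with hw
  have hwd : ∀ r, HasDerivAt w (-(Real.exp (κ * r ^ 2 - κ * R ^ 2) * (2 * κ * r))) r := fun r =>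
    ((hasDerivAt_mul_sq κ r).sub_const (κ * R ^ 2)).exp.const_sub 1
  have hφ : ∀ r : ℝ, zeroMode B h m r ^ 2 * r =
      r ^ (2 * m) * Real.exp (-(κ * r ^ 2)) * r := by
    intro r
    rw [zeroMode_sq, hκ]
    congr 4
    ring
  have hA : ∀ r ∈ Set.Ioo 0 R, |w r| ≤ (2 * κ * R) * (R - r) := by
    intro r hr
    have hr0 := hr.1
    have hr1 := hr.2
    have h1 : κ * r ^ 2 ≤ κ * R ^ 2 := by gcongr
    have h2 : Real.exp (κ * r ^ 2 - κ * R ^ 2) ≤ 1 := Real.exp_le_one_iff.2 (by linarith)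
    have h3 := Real.add_one_le_exp (κ * r ^ 2 - κ * R ^ 2)
    have h4 : κ * R ^ 2 - κ * r ^ 2 ≤ 2 * κ * R * (R - r) := by
      nlinarith [mul_nonneg hκ0.le (sq_nonneg (R - r))]
    rw [abs_of_nonneg (by simp only [hw]; linarith)]
    simp only [hw]; linarith
  have hmain := mum_mul_le_trial hR hB hh m (w := w) (by simp only [hw]; fun_prop) hA hh
  have hE := trial_energy_le m hκ0 hR
  have hN := le_trial_norm m hκ0 hR
  simp only [hφ] at hmain
  simp only [fun r => (hwd r).deriv] at hmain
  simp only [hw] at hmain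
  -- The relative loss in the norm.
  set x : ℝ := ∑ k ∈ Finset.range (m + 1), Real.exp (-S) * (S ^ k / (Nat.factorial k : ℝ)) +
    2 * (Real.exp (-S) * (S ^ (m + 1) / (Nat.factorial (m + 1) : ℝ))) with hx
  have hxle : x ≤ X / S := by
    rw [hx, hX, add_div, Finset.sum_div]
    apply add_le_add
    · exact Finset.sum_le_sum fun k _ => exp_neg_mul_pow_le hS0 k
    · have h1 := exp_neg_mul_pow_le hS0 (m + 1)
      push_cast at h1
      calc _ ≤ 2 * (((m : ℝ) + 1 + 1) / S) := by gcongr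
        _ = _ := by ring
  have hx0 : 0 ≤ x := by rw [hx]; positivity
  have hN' : (Nat.factorial m : ℝ) / (2 * κ ^ (m + 1)) * (1 - x) ≤
      ∫ r in Set.Ioo (0:ℝ) R, (1 - Real.exp (κ * r ^ 2 - κ * R ^ 2)) ^ 2 *
      (r ^ (2 * m) * Real.exp (-(κ * r ^ 2)) * r) := by
    refine le_trans (le_of_eq ?_) hN
    rw [hSκ, hx, ← Finset.mul_sum, expTail]
    have e1 : Real.exp (-S) * Real.exp S = 1 := by rw [← Real.exp_add]; simp
    congr 1
    linear_combination -e1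
  have h1 : mum R B h m * ((Nat.factorial m : ℝ) / (2 * κ ^ (m + 1)) * (1 - x)) ≤
      h ^ 2 * ((1 + h) * (2 * κ * R ^ (2 * m + 2) * Real.exp (-(κ * R ^ 2)))) := by
    refine (mul_le_mul_of_nonneg_left hN' hμ).trans (hmain.trans ?_)
    gcongr
  rw [hSκ] at h1
  set M : ℝ := 2 * h * B * S ^ (m + 1) / (Nat.factorial m) * Real.exp (-S) with hM
  have hM0 : 0 ≤ M := by rw [hM]; positivity
  have h2 : mum R B h m * (1 - x) ≤ M * (1 + h) := by
    have e1 : M * (1 + h) = (2 * κ ^ (m + 1)) / (Nat.factorial m : ℝ) *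
        (h ^ 2 * ((1 + h) * (2 * κ * R ^ (2 * m + 2) * Real.exp (-S)))) := by
      have eB : B = 2 * h * κ := by rw [hκ]; field_simp
      rw [hM, ← hSκ, eB]
      simp only [mul_pow, ← pow_mul]
      field_simp
      ring
    rw [e1]
    calc mum R B h m * (1 - x) = (2 * κ ^ (m + 1)) / (Nat.factorial m : ℝ) *
        (mum R B h m * ((Nat.factorial m : ℝ) / (2 * κ ^ (m + 1)) * (1 - x))) := by field_simp
      _ ≤ _ := by gcongr
  -- `(1 + h) / (1 - x) ≤ (1 + h) (1 + 2x) ≤ 1 + h + 4x` for `x ≤ 1/2` and `h ≤ 1`.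
  have h3 : M * (1 + h) ≤ M * (1 + (h + 4 * x)) * (1 - x) := by
    rw [mul_assoc M (1 + (h + 4 * x))]
    apply mul_le_mul_of_nonneg_left _ hM0
    nlinarith
  have h4 : mum R B h m ≤ M * (1 + (h + 4 * x)) :=
    le_of_mul_le_mul_right (h2.trans h3) (by linarith)
  refine h4.trans ?_
  gcongr

lemma integral_norm_pos {R : ℝ} {u : ℝ → ℂ} (hu : IsCptSmooth0R R u) (h0 : u ≠ 0) :
    0 < ∫ r in Set.Ioo (0:ℝ) R, ‖u r‖ ^ 2 * r := by
  have hz : ∀ r, r ∉ Set.Ioo 0 R → u r = 0 := fun r hr =>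
    image_eq_zero_of_notMem_tsupport fun h => hr (hu.2.2 h)
  have hc := hu.1.continuous
  rw [setIntegral_eq_integral_of_forall_compl_eq_zero (fun r hr => by simp [hz r hr])]
  obtain ⟨r₀, hr₀⟩ := Function.ne_iff.1 h0
  have hr₀' : r₀ ∈ Set.Ioo 0 R := by
    by_contra h
    exact hr₀ (hz r₀ h)
  refine Continuous.integral_pos_of_hasCompactSupport_nonneg_nonzero (x := r₀) (by fun_prop)
    ?_ ?_ ?_
  · refine hu.2.1.mono fun r hr h => hr ?_
    simp [h]
  · intro r
    by_cases hr : r ∈ Set.Ioo 0 R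
    · have := hr.1
      simp only [Pi.zero_apply]
      positivity
    · simp [hz r hr]
  · exact mul_ne_zero (pow_ne_zero 2 (norm_ne_zero_iff.2 hr₀)) hr₀'.1.ne'

/-- The infimum defining the bottom is over a nonempty set, so a uniform bound on the Rayleigh
quotients passes to it. -/
lemma le_mum {R B h Λ : ℝ} (hR : 0 < R) (m : ℤ)
    (hΛ : ∀ u : ℝ → ℂ, IsCptSmooth0R R u →
      Λ * ∫ r in Set.Ioo (0:ℝ) R, ‖u r‖ ^ 2 * r ≤ qm R B h m u) : Λ ≤ mum R B h m := by
  apply le_csInf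
  · obtain ⟨f, hf1, hf2, hf3, -, hf5⟩ := exists_contDiff_tsupport_subset
      (n := (⊤ : ℕ∞)) (Ioo_mem_nhds (half_pos hR) (half_lt_self hR))
    have hsub : Function.support (fun r => (f r : ℂ)) ⊆ Function.support f := by
      intro r hr h0
      exact hr (by simp [h0])
    refine ⟨_, fun r => (f r : ℂ), ⟨Complex.ofRealCLM.contDiff.comp hf3, hf2.mono hsub,
      (closure_mono hsub).trans hf1⟩, ?_, rfl⟩
    intro h0
    have := congrFun h0 (R / 2)
    simp [hf5] at this
  · rintro c ⟨u, hu, h0, rfl⟩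
    rw [le_div_iff₀ (integral_norm_pos hu h0)]
    exact hΛ u hu

/-- for `m ≥ 0`,
`μ_m(h) = 2hB (BR²/(2h))^{m+1}/m! · e^{−BR²/(2h)} (1 + O(h))` as `h → 0⁺`. -/
theorem stmt11 (R B : ℝ) (hR : 0 < R) (hB : 0 < B) (m : ℕ) :
    ∃ C > 0, ∃ h₀ > 0, ∀ h : ℝ, 0 < h → h < h₀ →
      |mum R B h (m : ℤ)
          - 2 * h * B * (B * R ^ 2 / (2 * h)) ^ (m + 1) / (Nat.factorial m) *
            Real.exp (-B * R ^ 2 / (2 * h))|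
        ≤ C * h * (2 * h * B * (B * R ^ 2 / (2 * h)) ^ (m + 1) / (Nat.factorial m) *
            Real.exp (-B * R ^ 2 / (2 * h))) := by
  set X : ℝ := ∑ k ∈ Finset.range (m + 1), ((k : ℝ) + 1) + 2 * ((m : ℝ) + 2) with hX
  set c : ℝ := ((m : ℝ) + 1) * (m + 3) with hc
  have hX0 : 0 < X := by
    have : 0 ≤ ∑ k ∈ Finset.range (m + 1), ((k : ℝ) + 1) :=
      Finset.sum_nonneg fun k _ => by positivity
    positivity
  have hc0 : 0 < c := by positivity
  refine ⟨1 + 8 * X / (B * R ^ 2) + 2 * c / (B * R ^ 2), by positivity,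
    min 1 (B * R ^ 2 / (4 * X)), by positivity, fun h hh hlt => ?_⟩
  have hh1 : h ≤ 1 := (hlt.trans_le (min_le_left _ _)).le
  have hh2 : h < B * R ^ 2 / (4 * X) := hlt.trans_le (min_le_right _ _)
  obtain ⟨S, hS⟩ : ∃ S, S = B * R ^ 2 / (2 * h) := ⟨_, rfl⟩
  have hS0 : 0 < S := by rw [hS]; positivity
  have hfac : (0:ℝ) < Nat.factorial m := by exact_mod_cast Nat.factorial_pos m
  rw [show -B * R ^ 2 / (2 * h) = -S by rw [hS]; ring, ← hS]
  set M : ℝ := 2 * h * B * S ^ (m + 1) / (Nat.factorial m) * Real.exp (-S) with hM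
  have hM0 : 0 < M := by rw [hM]; positivity
  have hlow : M / (1 + c / S) ≤ mum R B h m := by
    have h1 := le_mum hR (m : ℤ) fun u hu => qm_ge hB hh m hu hS rfl
    refine le_trans (le_of_eq ?_) h1
    rw [hM, Real.exp_neg, hc]
    field_simp
  have hμ0 : 0 ≤ mum R B h m := le_trans (by positivity) hlow
  have hlow' : M * (1 - c / S) ≤ mum R B h m := by
    refine le_trans ?_ hlow
    rw [le_div_iff₀ (by positivity), mul_assoc]
    have : 0 ≤ M * (c / S) ^ 2 := by positivity
    nlinarith
  have hXS : X / S ≤ 1 / 2 := by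
    rw [lt_div_iff₀ (by positivity)] at hh2
    rw [hS, div_div_eq_mul_div, div_le_iff₀ (by positivity)]
    linarith
  have hup := mum_upper hR hB hh hh1 m hS hX hXS hμ0
  rw [← hM] at hup
  have e1 : c / S = 2 * c / (B * R ^ 2) * h := by rw [hS]; field_simp
  have e2 : 4 * (X / S) = 8 * X / (B * R ^ 2) * h := by rw [hS]; field_simp; ring
  have p1 : 0 ≤ 2 * c / (B * R ^ 2) * h * M := by positivity
  have p2 : 0 ≤ 8 * X / (B * R ^ 2) * h * M := by positivity
  have p3 : 0 ≤ h * M := by positivity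
  rw [e2] at hup
  rw [e1] at hlow'
  rw [abs_le]
  constructor <;> linarith
end
end

section
/- Let R > 0, B > 0, h > 0, let m ≥ 0 be an integer, and define v_m(r) := r^m ( e^{B(R²−r²)/(4h)} − e^{B(r²−R²)/(4h)} ). Then for every r with 0 < r ≤ R one has the differential identity −h² ( v_m''(r) + v_m'(r)/r ) + h² (m/r − Br/(2h))² v_m(r) − hB v_m(r) = 2(m+1) h B r^m e^{B(r²−R²)/(4h)}. -/
/-!
Each of the two summands of `v` has the form `f x = x ^ m * exp (φ x)` with `φ' x = c * x`, where
`c = ∓B / (2h)`. Away from the origin such an `f` satisfies `f' = (m / x + c x) f`, whence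
`f'' + f' / x = ((m / x + c x) ^ 2 + 2 c) f`. For `c = -B / (2h)` the operator
`-h² (∂² + ∂ / r) + h² (m / r - B r / (2h))² - h B` annihilates `f`, while for `c = B / (2h)` it
multiplies `f` by `-2 (m + 1) h B`; the difference of the two is the claim.
-/

noncomputable section

/-- The logarithmic derivative form of the product rule; writing the derivative of `x ^ m` as
`m / x * x ^ m` avoids the truncated exponent `m - 1`. -/
lemma hasDerivAt_pow_mul_exp (m : ℕ) (c : ℝ) {φ : ℝ → ℝ} {x : ℝ} (hx : x ≠ 0)
    (hφ : HasDerivAt φ (c * x) x) :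
    HasDerivAt (fun y => y ^ m * Real.exp (φ y))
      ((m / x + c * x) * (x ^ m * Real.exp (φ x))) x := by
  refine ((hasDerivAt_pow m x).mul hφ.exp).congr_deriv ?_
  rcases m with _ | k
  · simp
    ring
  · simp only [Nat.add_sub_cancel, pow_succ]
    field_simp

lemma hasDerivAt_deriv_pow_mul_exp (m : ℕ) (c : ℝ) {φ : ℝ → ℝ} {x : ℝ} (hx : x ≠ 0)
    (hφ : HasDerivAt φ (c * x) x) :
    HasDerivAt (fun y => (m / y + c * y) * (y ^ m * Real.exp (φ y)))
      (((m / x + c * x) ^ 2 - m / x ^ 2 + c) * (x ^ m * Real.exp (φ x))) x := by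
  have h1 : HasDerivAt (fun y : ℝ => (m : ℝ) / y + c * y) (-(m : ℝ) / x ^ 2 + c) x := by
    have h2 := ((hasDerivAt_inv hx).const_mul (m : ℝ)).add ((hasDerivAt_id x).const_mul c)
    refine (h2.congr_deriv ?_)
    ring
  refine (h1.mul (hasDerivAt_pow_mul_exp m c hx hφ)).congr_deriv ?_
  ring

/-- the quasimode `v_m(r) = r^m (e^{B(R²−r²)/(4h)} − e^{B(r²−R²)/(4h)})`
satisfies `𝒫_m v_m = 2(m+1) h B r^m e^{B(r²−R²)/(4h)}` on `(0, R]`. -/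
theorem stmt12 (R B h : ℝ) (hR : 0 < R) (hB : 0 < B) (hh : 0 < h) (m : ℕ)
    (v : ℝ → ℝ)
    (hv : v = fun r => r ^ m *
      (Real.exp (B * (R ^ 2 - r ^ 2) / (4 * h)) - Real.exp (B * (r ^ 2 - R ^ 2) / (4 * h))))
    (r : ℝ) (hr0 : 0 < r) (hrR : r ≤ R) :
    -h ^ 2 * (deriv (deriv v) r + deriv v r / r)
        + h ^ 2 * ((m : ℝ) / r - B * r / (2 * h)) ^ 2 * v r - h * B * v r
      = 2 * (m + 1) * h * B * r ^ m * Real.exp (B * (r ^ 2 - R ^ 2) / (4 * h)) := by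
  have hφ : ∀ x, HasDerivAt (fun y : ℝ => B * (R ^ 2 - y ^ 2) / (4 * h)) (-B / (2 * h) * x) x := by
    intro x
    refine ((((hasDerivAt_pow 2 x).const_sub (R ^ 2)).const_mul B).div_const (4 * h)).congr_deriv ?_
    field_simp
    norm_num
    ring
  have hψ : ∀ x, HasDerivAt (fun y : ℝ => B * (y ^ 2 - R ^ 2) / (4 * h)) (B / (2 * h) * x) x := by
    intro x
    refine ((((hasDerivAt_pow 2 x).sub_const (R ^ 2)).const_mul B).div_const (4 * h)).congr_deriv ?_
    field_simp
    norm_num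
    ring
  have hv' : v = fun x => x ^ m * Real.exp (B * (R ^ 2 - x ^ 2) / (4 * h))
      - x ^ m * Real.exp (B * (x ^ 2 - R ^ 2) / (4 * h)) := by
    rw [hv]
    funext x
    ring
  have hd : ∀ x, x ≠ 0 → deriv v x =
      (m / x + -B / (2 * h) * x) * (x ^ m * Real.exp (B * (R ^ 2 - x ^ 2) / (4 * h)))
      - (m / x + B / (2 * h) * x) * (x ^ m * Real.exp (B * (x ^ 2 - R ^ 2) / (4 * h))) := by
    intro x hx
    rw [hv']
    exact ((hasDerivAt_pow_mul_exp m _ hx (hφ x)).sub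
      (hasDerivAt_pow_mul_exp m _ hx (hψ x))).deriv
  -- The formula for `deriv v` holds near `r`, so it may be differentiated there.
  have hdd := (((hasDerivAt_deriv_pow_mul_exp m _ hr0.ne' (hφ r)).sub
    (hasDerivAt_deriv_pow_mul_exp m _ hr0.ne' (hψ r))).congr_of_eventuallyEq
      ((eventually_ne_nhds hr0.ne').mono hd)).deriv
  rw [hdd, hd r hr0.ne', hv']
  field_simp
  ring
end
end

section
/- Let R > 0, B > 0 and let m ≥ 0 be an integer, and define v_m(r) := r^m ( e^{B(R²−r²)/(4h)} − e^{B(r²−R²)/(4h)} ). Then there exist constants C > 0 and h₀ > 0 such that for all 0 < h < h₀: | ∫₀^R v_m(r)² r dr − 2^m · m! · (h/B)^{m+1} e^{BR²/(2h)} | ≤ C; that is, ∫₀^R v_m(r)² r dr = 2^m m! (h/B)^{m+1} e^{BR²/(2h)} + O(1) as h → 0⁺. -/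
open MeasureTheory

noncomputable section

/-!
With `a = B / (2h)`, expanding the square gives
`v_m(r)² r = r^(2m+1) e^{a(R²-r²)} + r^(2m+1) (e^{a(r²-R²)} - 2)`.
The second term is bounded by `2 R^(2m+1)` on `[0, R]`, so it contributes `O(1)`.
For the first, `J_m(a) = ∫₀^R r^(2m+1) e^{a(R²-r²)} dr` satisfies, by integration by parts,
`a J_{m+1} = (m+1) J_m - R^(2m+2) / 2`. The main term `M_m = m! e^{aR²} / (2 a^(m+1))`
satisfies the same recursion without the boundary term, so `J_m - M_m` stays bounded for `a ≥ 1`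
by induction on `m` (`exists_main_bound`).
-/

lemma hasDerivAt_exp_sq (R a r : ℝ) :
    HasDerivAt (fun r : ℝ => Real.exp (a * (R ^ 2 - r ^ 2)))
      (-(2 * a * r) * Real.exp (a * (R ^ 2 - r ^ 2))) r := by
  have h := (((hasDerivAt_pow 2 r).const_sub (R ^ 2)).const_mul a).exp
  convert h using 1
  simp
  ring

lemma integral_zero_case (R a : ℝ) (ha : a ≠ 0) :
    ∫ r in (0 : ℝ)..R, r ^ (2 * 0 + 1) * Real.exp (a * (R ^ 2 - r ^ 2))
      = (Real.exp (a * R ^ 2) - 1) / (2 * a) := by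
  have h : ∀ r ∈ Set.uIcc 0 R, HasDerivAt
      (fun r : ℝ => -(1 / (2 * a)) * Real.exp (a * (R ^ 2 - r ^ 2)))
      (r ^ (2 * 0 + 1) * Real.exp (a * (R ^ 2 - r ^ 2))) r := by
    intro r _
    refine ((hasDerivAt_exp_sq R a r).const_mul (-(1 / (2 * a)))).congr_deriv ?_
    field_simp
    ring
  rw [intervalIntegral.integral_eq_sub_of_hasDerivAt h
    (Continuous.intervalIntegrable (by fun_prop) _ _)]
  simp
  field_simp
  ring

/-- Integration by parts: the recursion for the moments `J_m(a)`. -/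
lemma integral_succ (R a : ℝ) (m : ℕ) :
    a * ∫ r in (0 : ℝ)..R, r ^ (2 * (m + 1) + 1) * Real.exp (a * (R ^ 2 - r ^ 2))
      = (m + 1) * (∫ r in (0 : ℝ)..R, r ^ (2 * m + 1) * Real.exp (a * (R ^ 2 - r ^ 2)))
        - R ^ (2 * m + 2) / 2 := by
  have h : ∀ r ∈ Set.uIcc 0 R, HasDerivAt
      (fun r : ℝ => r ^ (2 * m + 2) / 2 * Real.exp (a * (R ^ 2 - r ^ 2)))
      ((m + 1) * (r ^ (2 * m + 1) * Real.exp (a * (R ^ 2 - r ^ 2)))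
        - a * (r ^ (2 * (m + 1) + 1) * Real.exp (a * (R ^ 2 - r ^ 2)))) r := by
    intro r _
    refine (((hasDerivAt_pow (2 * m + 2) r).div_const 2).mul
      (hasDerivAt_exp_sq R a r)).congr_deriv ?_
    rw [show 2 * m + 2 - 1 = 2 * m + 1 from rfl]
    push_cast
    ring
  have key := intervalIntegral.integral_eq_sub_of_hasDerivAt h
    (Continuous.intervalIntegrable (by fun_prop) _ _)
  rw [intervalIntegral.integral_sub (Continuous.intervalIntegrable (by fun_prop) _ _)
    (Continuous.intervalIntegrable (by fun_prop) _ _), intervalIntegral.integral_const_mul,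
    intervalIntegral.integral_const_mul] at key
  simp at key
  linarith

lemma exists_main_bound (R : ℝ) (m : ℕ) : ∃ C : ℝ, ∀ a : ℝ, 1 ≤ a →
    |(∫ r in (0 : ℝ)..R, r ^ (2 * m + 1) * Real.exp (a * (R ^ 2 - r ^ 2)))
      - m.factorial / (2 * a ^ (m + 1)) * Real.exp (a * R ^ 2)| ≤ C := by
  induction m with
  | zero =>
    refine ⟨1, fun a ha => ?_⟩
    have h0 : 0 < a := by linarith
    rw [integral_zero_case R a h0.ne']
    have : (Real.exp (a * R ^ 2) - 1) / (2 * a)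
        - (Nat.factorial 0 : ℝ) / (2 * a ^ (0 + 1)) * Real.exp (a * R ^ 2) = -(1 / (2 * a)) := by
      simp
      field_simp
      ring
    rw [this, abs_neg, abs_of_pos (by positivity), div_le_one (by positivity)]
    linarith
  | succ m ih =>
    obtain ⟨C, hC⟩ := ih
    refine ⟨(m + 1) * C + |R ^ (2 * m + 2) / 2|, fun a ha => ?_⟩
    have h0 : 0 < a := by linarith
    have hrec := integral_succ R a m
    have hb := hC a ha
    set J := ∫ r in (0 : ℝ)..R, r ^ (2 * m + 1) * Real.exp (a * (R ^ 2 - r ^ 2))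
    set J' := ∫ r in (0 : ℝ)..R, r ^ (2 * (m + 1) + 1) * Real.exp (a * (R ^ 2 - r ^ 2))
    set D := J' - ((m + 1).factorial : ℝ) / (2 * a ^ (m + 1 + 1)) * Real.exp (a * R ^ 2) with hD
    have haD : a * D = (m + 1) * (J - m.factorial / (2 * a ^ (m + 1)) * Real.exp (a * R ^ 2))
        - R ^ (2 * m + 2) / 2 := by
      rw [hD, mul_sub, hrec, Nat.factorial_succ]
      push_cast
      field_simp
      ring
    calc |D| ≤ a * |D| := le_mul_of_one_le_left (abs_nonneg _) ha
      _ = |a * D| := by rw [abs_mul, abs_of_pos h0]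
      _ ≤ |(m + 1) * (J - m.factorial / (2 * a ^ (m + 1)) * Real.exp (a * R ^ 2))|
          + |R ^ (2 * m + 2) / 2| := by rw [haD]; exact abs_sub _ _
      _ ≤ _ := by
        rw [abs_mul, abs_of_pos (by positivity : (0 : ℝ) < m + 1)]
        gcongr

/-- the squared norm of the quasimode satisfies
`∫₀^R v_m(r)² r dr = 2^m m! (h/B)^{m+1} e^{BR²/(2h)} + O(1)` as `h → 0⁺`. -/
theorem stmt13 (R B : ℝ) (hR : 0 < R) (hB : 0 < B) (m : ℕ) :
    ∃ C > 0, ∃ h₀ > 0, ∀ h : ℝ, 0 < h → h < h₀ →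
      |(∫ r in Set.Ioo (0:ℝ) R,
            (r ^ m * (Real.exp (B * (R ^ 2 - r ^ 2) / (4 * h))
              - Real.exp (B * (r ^ 2 - R ^ 2) / (4 * h)))) ^ 2 * r)
          - 2 ^ m * (Nat.factorial m) * (h / B) ^ (m + 1) * Real.exp (B * R ^ 2 / (2 * h))|
        ≤ C := by
  obtain ⟨C, hC⟩ := exists_main_bound R m
  have hC0 : 0 ≤ C := (abs_nonneg _).trans (hC 1 le_rfl)
  -- `h < B / 2` makes `a = B / (2h)` larger than `1`.
  refine ⟨C + 2 * R ^ (2 * m + 1) * R, by positivity, B / 2, by positivity, fun h hh hlt => ?_⟩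
  obtain ⟨a, ha⟩ : ∃ a, a = B / (2 * h) := ⟨_, rfl⟩
  have ha1 : 1 ≤ a := by
    rw [ha, le_div_iff₀ (by positivity)]
    linarith
  have hexpand : ∀ r : ℝ, (r ^ m * (Real.exp (B * (R ^ 2 - r ^ 2) / (4 * h))
      - Real.exp (B * (r ^ 2 - R ^ 2) / (4 * h)))) ^ 2 * r
      = r ^ (2 * m + 1) * Real.exp (a * (R ^ 2 - r ^ 2))
        + r ^ (2 * m + 1) * (Real.exp (a * (r ^ 2 - R ^ 2)) - 2) := by
    intro r
    have e1 : Real.exp (a * (R ^ 2 - r ^ 2)) = Real.exp (B * (R ^ 2 - r ^ 2) / (4 * h)) ^ 2 := by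
      rw [← Real.exp_nat_mul, ha]
      congr 1
      push_cast
      field_simp
      ring
    have e2 : Real.exp (a * (r ^ 2 - R ^ 2)) = Real.exp (B * (r ^ 2 - R ^ 2) / (4 * h)) ^ 2 := by
      rw [← Real.exp_nat_mul, ha]
      congr 1
      push_cast
      field_simp
      ring
    have e3 : Real.exp (B * (R ^ 2 - r ^ 2) / (4 * h))
        * Real.exp (B * (r ^ 2 - R ^ 2) / (4 * h)) = 1 := by
      rw [← Real.exp_add, ← Real.exp_zero]
      congr 1
      ring
    rw [e1, e2]
    linear_combination (-2 * r ^ (2 * m + 1)) * e3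
  have hmain : 2 ^ m * (Nat.factorial m : ℝ) * (h / B) ^ (m + 1) * Real.exp (B * R ^ 2 / (2 * h))
      = m.factorial / (2 * a ^ (m + 1)) * Real.exp (a * R ^ 2) := by
    have : B * R ^ 2 / (2 * h) = a * R ^ 2 := by rw [ha]; ring
    rw [this, ha]
    congr 1
    rw [div_pow, div_pow, mul_pow]
    field_simp
    ring
  rw [← integral_Ioc_eq_integral_Ioo, ← intervalIntegral.integral_of_le hR.le, hmain]
  simp_rw [hexpand]
  rw [intervalIntegral.integral_add (Continuous.intervalIntegrable (by fun_prop) _ _)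
    (Continuous.intervalIntegrable (by fun_prop) _ _), add_sub_right_comm]
  refine (abs_add_le _ _).trans (add_le_add (hC a ha1) ?_)
  have hrem := intervalIntegral.norm_integral_le_of_norm_le_const (a := 0) (b := R)
    (f := fun r : ℝ => r ^ (2 * m + 1) * (Real.exp (a * (r ^ 2 - R ^ 2)) - 2))
    (C := 2 * R ^ (2 * m + 1)) (by
      intro r hr
      rw [Set.uIoc_of_le hR.le] at hr
      have hexp : Real.exp (a * (r ^ 2 - R ^ 2)) ≤ 1 := by
        rw [Real.exp_le_one_iff]
        have : r ^ 2 ≤ R ^ 2 := pow_le_pow_left₀ hr.1.le hr.2 2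
        nlinarith
      have hpos := Real.exp_pos (a * (r ^ 2 - R ^ 2))
      rw [Real.norm_eq_abs, abs_mul, abs_of_nonneg (pow_nonneg hr.1.le _), mul_comm]
      have h2 : |Real.exp (a * (r ^ 2 - R ^ 2)) - 2| ≤ 2 := by
        rw [abs_le]
        constructor <;> linarith
      have hp : r ^ (2 * m + 1) ≤ R ^ (2 * m + 1) := pow_le_pow_left₀ hr.1.le hr.2 _
      exact mul_le_mul h2 hp (pow_nonneg hr.1.le _) (by norm_num))
  rwa [sub_zero, abs_of_pos hR, Real.norm_eq_abs] at hrem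
end
end

section
/- Let R > 0, B > 0 and let m ≥ 0 be an integer. Then there exist constants C > 0 and h₀ > 0 such that for all 0 < h < h₀: | 2(m+1) h B ∫₀^R r^{2m+1} ( e^{B(R²−r²)/(4h)} − e^{B(r²−R²)/(4h)} ) e^{B(r²−R²)/(4h)} dr − h B R^{2(m+1)} | ≤ C h². (This is the statement that the energy ⟨v_m, 𝒫_m v_m⟩ of the quasimode v_m(r) = r^m(e^{B(R²−r²)/(4h)} − e^{B(r²−R²)/(4h)}) equals hBR^{2(m+1)} + O(h²) as h → 0⁺.) -/
open MeasureTheory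

noncomputable section

/-!
Multiplying out, the integrand is `r^(2m+1) * (1 - exp (B (r² - R²) / (2h)))`. The monomial
integrates to `R^(2m+2) / (2m+2)` and yields exactly the leading term `h B R^(2(m+1))`. On the
remaining integral `r^(2m) ≤ R^(2m)`, and `r * exp (B (r² - R²) / (2h))` has the primitive
`(h/B) * exp (B (r² - R²) / (2h))`, so that integral lies between `0` and `R^(2m) h / B`
(`boundary_layer_le`). Hence the bound holds for every `h > 0` with `C = 2 (m+1) R^(2m)`.
-/

/-- The exponential weight concentrates within distance `O(h)` of `r = R`, so the integral is
`O(h)`. -/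
lemma boundary_layer_le {R B h : ℝ} (hR : 0 < R) (hB : 0 < B) (hh : 0 < h) (m : ℕ) :
    ∫ r in (0:ℝ)..R, r ^ (2 * m + 1) * Real.exp (B * (r ^ 2 - R ^ 2) / (2 * h))
      ≤ R ^ (2 * m) * (h / B) := by
  have hprim : ∫ r in (0:ℝ)..R, r * Real.exp (B * (r ^ 2 - R ^ 2) / (2 * h))
      = h / B * Real.exp (B * (R ^ 2 - R ^ 2) / (2 * h))
        - h / B * Real.exp (B * (0 ^ 2 - R ^ 2) / (2 * h)) := by
    refine intervalIntegral.integral_eq_sub_of_hasDerivAt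
      (f := fun r => h / B * Real.exp (B * (r ^ 2 - R ^ 2) / (2 * h))) (fun r _ => ?_)
      (Continuous.intervalIntegrable (by fun_prop) _ _)
    have h1 : HasDerivAt (fun r : ℝ => B * (r ^ 2 - R ^ 2) / (2 * h)) (B * (2 * r) / (2 * h)) r := by
      have h2 := (((hasDerivAt_pow 2 r).sub_const (R ^ 2)).const_mul B).div_const (2 * h)
      simpa using h2
    refine (h1.exp.const_mul (h / B)).congr_deriv ?_
    field_simp
  calc _ ≤ ∫ r in (0:ℝ)..R, R ^ (2 * m) * (r * Real.exp (B * (r ^ 2 - R ^ 2) / (2 * h))) := by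
        refine intervalIntegral.integral_mono_on hR.le
          (Continuous.intervalIntegrable (by fun_prop) _ _)
          (Continuous.intervalIntegrable (by fun_prop) _ _) (fun r hr => ?_)
        have hp : r ^ (2 * m) ≤ R ^ (2 * m) := pow_le_pow_left₀ hr.1 hr.2 _
        rw [pow_succ, mul_assoc]
        exact mul_le_mul_of_nonneg_right hp (mul_nonneg hr.1 (Real.exp_pos _).le)
    _ ≤ _ := by
        rw [intervalIntegral.integral_const_mul, hprim]
        refine mul_le_mul_of_nonneg_left ?_ (by positivity)
        have : 0 < h / B * Real.exp (B * (0 ^ 2 - R ^ 2) / (2 * h)) := by positivity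
        simp only [sub_self, mul_zero, zero_div, Real.exp_zero, mul_one]
        linarith

/-- the energy of the quasimode satisfies
`⟨v_m, 𝒫_m v_m⟩ = hBR^{2(m+1)} + O(h²)` as `h → 0⁺`. -/
theorem stmt14 (R B : ℝ) (hR : 0 < R) (hB : 0 < B) (m : ℕ) :
    ∃ C > 0, ∃ h₀ > 0, ∀ h : ℝ, 0 < h → h < h₀ →
      |(2 * (m + 1) * h * B * ∫ r in Set.Ioo (0:ℝ) R,
            r ^ (2 * m + 1) * (Real.exp (B * (R ^ 2 - r ^ 2) / (4 * h))
              - Real.exp (B * (r ^ 2 - R ^ 2) / (4 * h)))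
              * Real.exp (B * (r ^ 2 - R ^ 2) / (4 * h)))
          - h * B * R ^ (2 * (m + 1))|
        ≤ C * h ^ 2 := by
  refine ⟨2 * (m + 1) * R ^ (2 * m), by positivity, 1, one_pos, fun h hh _ => ?_⟩
  have hint : ∀ r : ℝ, r ^ (2 * m + 1) * (Real.exp (B * (R ^ 2 - r ^ 2) / (4 * h))
              - Real.exp (B * (r ^ 2 - R ^ 2) / (4 * h)))
              * Real.exp (B * (r ^ 2 - R ^ 2) / (4 * h))
      = r ^ (2 * m + 1) - r ^ (2 * m + 1) * Real.exp (B * (r ^ 2 - R ^ 2) / (2 * h)) := by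
    intro r
    have e1 : B * (R ^ 2 - r ^ 2) / (4 * h) + B * (r ^ 2 - R ^ 2) / (4 * h) = 0 := by ring
    have e2 : B * (r ^ 2 - R ^ 2) / (4 * h) + B * (r ^ 2 - R ^ 2) / (4 * h)
        = B * (r ^ 2 - R ^ 2) / (2 * h) := by
      field_simp
      ring
    rw [mul_assoc, sub_mul, ← Real.exp_add, ← Real.exp_add, e1, e2, Real.exp_zero]
    ring
  simp_rw [hint]
  rw [← integral_Ioc_eq_integral_Ioo, ← intervalIntegral.integral_of_le hR.le,
    intervalIntegral.integral_sub (Continuous.intervalIntegrable (by fun_prop) _ _)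
      (Continuous.intervalIntegrable (by fun_prop) _ _), integral_pow]
  have hle := boundary_layer_le hR hB hh m
  have hnn : 0 ≤ ∫ r in (0:ℝ)..R, r ^ (2 * m + 1) * Real.exp (B * (r ^ 2 - R ^ 2) / (2 * h)) :=
    intervalIntegral.integral_nonneg hR.le fun r hr =>
      mul_nonneg (pow_nonneg hr.1 _) (Real.exp_pos _).le
  generalize (∫ r in (0:ℝ)..R,
    r ^ (2 * m + 1) * Real.exp (B * (r ^ 2 - R ^ 2) / (2 * h))) = J at hle hnn ⊢
  have key : 2 * ((m:ℝ) + 1) * h * B * ((R ^ (2 * m + 1 + 1) - 0 ^ (2 * m + 1 + 1))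
      / (((2 * m + 1 : ℕ) : ℝ) + 1) - J) - h * B * R ^ (2 * (m + 1))
      = -(2 * (m + 1) * h * B * J) := by
    have hm : ((2 * m + 1 : ℕ) : ℝ) + 1 = 2 * ((m:ℝ) + 1) := by
      push_cast
      ring
    have hm0 : (m:ℝ) + 1 ≠ 0 := by positivity
    rw [hm, zero_pow (by omega), show 2 * m + 1 + 1 = 2 * (m + 1) by ring]
    field_simp
    ring
  rw [key, abs_neg, abs_of_nonneg (by positivity)]
  calc 2 * ((m:ℝ) + 1) * h * B * J ≤ 2 * (m + 1) * h * B * (R ^ (2 * m) * (h / B)) := by gcongr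
    _ = _ := by field_simp
end
end

section
/- Let U ⊂ ℝ² be open, ψ : U → ℝ twice continuously differentiable, x₀ ∈ U, and ε > 0 such that the closed disk of radius ε around x₀ is contained in U. Assume ψ(x) > ψ(x₀) for all x ≠ x₀ in that closed disk, and that the Hessian matrix Hess ψ(x₀) is positive definite. Then lim_{h→0⁺} (1/h) ∫_{D(x₀,ε)} exp( −2(ψ(x) − ψ(x₀))/h ) dx = π · (det Hess ψ(x₀))^{−1/2}, where D(x₀,ε) is the open disk of radius ε around x₀. -/
/-!
The substitution `x = x₀ + √h y` turns `(1/h) ∫_{D(x₀,ε)} exp (-2 (ψ x - ψ x₀) / h) dx` into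
the integral over the plane of `exp (-2 (ψ (x₀ + √h y) - ψ x₀) / h)`, cut off to
`x₀ + √h y ∈ D(x₀,ε)` (`rescale_integral`). Since `x₀` is a critical point, the second-order
Taylor expansion (`taylor_two_isLittleO`) shows that the integrand tends pointwise to
`exp (-⟨y, H y⟩)`, where `H` is the Hessian at `x₀`. Strict minimality on the closed disk and
positivity of `H` give `ψ x - ψ x₀ ≥ c ‖x - x₀‖²` on the disk (`exists_quadratic_growth`), so
`exp (-2 c ‖y‖²)` dominates, and dominated convergence applies. The limit is the planar Gaussian
integral `π (det H)^(-1/2)` (`integral_exp_neg_quad`).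
-/

open MeasureTheory Filter Topology

noncomputable section

abbrev E2 : Type := EuclideanSpace ℝ (Fin 2)

/-- Partial derivative of a complex-valued function in the `i`-th coordinate direction. -/
def pdC (i : Fin 2) (f : E2 → ℂ) (x : E2) : ℂ :=
  fderiv ℝ f x (EuclideanSpace.single i 1)

/-- Partial derivative of a real-valued function in the `i`-th coordinate direction. -/
def pdR (i : Fin 2) (f : E2 → ℝ) (x : E2) : ℝ :=
  fderiv ℝ f x (EuclideanSpace.single i 1)

/-- The Laplacian `Δf = ∂₁²f + ∂₂²f`. -/
def lapl (f : E2 → ℝ) (x : E2) : ℝ :=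
  pdR 0 (pdR 0 f) x + pdR 1 (pdR 1 f) x

/-- The Hessian matrix of second partial derivatives of `ψ` at `x`. -/
def hess (ψ : E2 → ℝ) (x : E2) : Matrix (Fin 2) (Fin 2) ℝ :=
  Matrix.of fun i j => pdR i (pdR j ψ) x

/-- Second-order Taylor expansion with Peano remainder at a critical point. -/
theorem taylor_two_isLittleO {E : Type*} [NormedAddCommGroup E] [NormedSpace ℝ E]
    {f : E → ℝ} {x : E} (hf : ContDiffAt ℝ 2 f x) (hx : fderiv ℝ f x = 0) :
    (fun y => f y - f x - (1 / 2) * fderiv ℝ (fderiv ℝ f) x (y - x) (y - x))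
      =o[𝓝 x] fun y => ‖y - x‖ ^ 2 := by
  set B := fderiv ℝ (fderiv ℝ f) x with hB
  have hsymm : ∀ v w, B v w = B w v := fun v w =>
    (hf.isSymmSndFDerivAt (by simp)) v w
  have hd : HasFDerivAt (fderiv ℝ f) B x :=
    ((hf.fderiv_right (m := 1) (by norm_num)).differentiableAt (by norm_num)).hasFDerivAt
  have hdiff : ∀ᶠ y in 𝓝 x, DifferentiableAt ℝ f y :=
    (hf.eventually (by simp)).mono fun y hy => hy.differentiableAt (by norm_num)
  rw [Asymptotics.isLittleO_iff]
  intro c hc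
  have h1 := (Asymptotics.isLittleO_iff.1 hd.isLittleO) hc
  obtain ⟨r, hr, hball⟩ := Metric.eventually_nhds_iff_ball.1 (h1.and hdiff)
  filter_upwards [Metric.ball_mem_nhds x hr] with y hy
  have hsub : Metric.closedBall x ‖y - x‖ ⊆ Metric.ball x r :=
    Metric.closedBall_subset_ball (by simpa [dist_eq_norm] using hy)
  have hg : ∀ z ∈ Metric.closedBall x ‖y - x‖,
      HasFDerivWithinAt (fun z => f z - (1 / 2) * B (z - x) (z - x))
        (fderiv ℝ f z - B (z - x)) (Metric.closedBall x ‖y - x‖) z := by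
    intro z hz
    have hid : HasFDerivAt (fun z => z - x) (ContinuousLinearMap.id ℝ E) z :=
      (hasFDerivAt_id z).sub_const x
    have hBz : HasFDerivAt (fun z => B (z - x)) B z := (B.hasFDerivAt (x := z - x)).comp z hid
    have h2 := ((hball z (hsub hz)).2.hasFDerivAt.sub
      ((hBz.clm_apply hid).const_mul (1 / 2)))
    refine (h2.congr_fderiv ?_).hasFDerivWithinAt
    ext v
    simp [hsymm v z, hsymm v x]
    ring
  have hbound : ∀ z ∈ Metric.closedBall x ‖y - x‖,
      ‖fderiv ℝ f z - B (z - x)‖ ≤ c * ‖y - x‖ := by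
    intro z hz
    have h3 := (hball z (hsub hz)).1
    rw [hx, sub_zero] at h3
    refine h3.trans ?_
    gcongr
    simpa [dist_eq_norm] using hz
  have := (convex_closedBall x ‖y - x‖).norm_image_sub_le_of_norm_hasFDerivWithin_le hg hbound
    (Metric.mem_closedBall_self (norm_nonneg _)) (y := y) (by simp [dist_eq_norm])
  simp only [sub_self, map_zero, mul_zero, sub_zero] at this
  rw [norm_pow, norm_norm]
  calc _ = ‖f y - 1 / 2 * B (y - x) (y - x) - f x‖ := by congr 1; ring
    _ ≤ _ := this
    _ = _ := by ring

theorem integrable_exp_neg_mul_norm_sq {b : ℝ} (hb : 0 < b) :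
    Integrable (fun v : E2 => Real.exp (-b * ‖v‖ ^ 2)) := by
  apply Integrable.of_integral_ne_zero
  rw [GaussianFourier.integral_rexp_neg_mul_sq_norm hb]
  positivity

/-- A positive definite binary quadratic form is bounded below by `det / trace` times the
squared norm, since the smaller eigenvalue is at least `det / trace`. -/
theorem quad_lower_bound {a b d : ℝ} (ha : 0 < a) (hD : 0 < a * d - b ^ 2) (v : E2) :
    (a * d - b ^ 2) / (a + d) * ‖v‖ ^ 2 ≤ a * v 0 ^ 2 + 2 * b * v 0 * v 1 + d * v 1 ^ 2 := by
  have hd : 0 < d := by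
    by_contra! h
    nlinarith [sq_nonneg b, mul_nonneg ha.le (neg_nonneg.2 h)]
  rw [EuclideanSpace.norm_sq_eq]
  simp only [Fin.sum_univ_two, Real.norm_eq_abs, sq_abs]
  rw [div_mul_eq_mul_div, div_le_iff₀ (by positivity)]
  have h : 0 < a ^ 2 + b ^ 2 := by positivity
  -- After multiplication by `a ^ 2 + b ^ 2` the difference is a sum of squares.
  refine le_of_mul_le_mul_left ?_ h
  nlinarith [sq_nonneg ((a ^ 2 + b ^ 2) * v 0 + b * (a + d) * v 1),
    sq_nonneg ((a * d - b ^ 2) * v 1)]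

/-- The planar Gaussian integral, computed by completing the square in the first variable. -/
theorem integral_exp_neg_quad {a b d : ℝ} (ha : 0 < a) (hD : 0 < a * d - b ^ 2) :
    ∫ v : E2, Real.exp (-(a * v 0 ^ 2 + 2 * b * v 0 * v 1 + d * v 1 ^ 2)) =
      Real.pi * (a * d - b ^ 2) ^ (-(1 : ℝ) / 2) := by
  have hd : 0 < d := by
    by_contra! h
    nlinarith [sq_nonneg b, mul_nonneg ha.le (neg_nonneg.2 h)]
  have hintegr : Integrable
      (fun v : E2 => Real.exp (-(a * v 0 ^ 2 + 2 * b * v 0 * v 1 + d * v 1 ^ 2))) := by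
    refine (integrable_exp_neg_mul_norm_sq (b := (a * d - b ^ 2) / (a + d))
      (by positivity)).mono' (by fun_prop) (ae_of_all _ fun v => ?_)
    rw [Real.norm_eq_abs, Real.abs_exp, Real.exp_le_exp]
    linarith [quad_lower_bound ha hD v]
  have hmp : MeasurePreserving
      ((MeasurableEquiv.finTwoArrow (α := ℝ)).symm.trans (MeasurableEquiv.toLp 2 (Fin 2 → ℝ))) :=
    (PiLp.volume_preserving_toLp (Fin 2)).comp (volume_preserving_finTwoArrow ℝ).symm
  rw [← hmp.integral_comp' (g := fun v : E2 =>
    Real.exp (-(a * v 0 ^ 2 + 2 * b * v 0 * v 1 + d * v 1 ^ 2)))]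
  have hintegr₂ := (hmp.integrable_comp_emb (MeasurableEquiv.measurableEmbedding _)).2 hintegr
  have hcomp : ∀ p : ℝ × ℝ, ((MeasurableEquiv.finTwoArrow (α := ℝ)).symm.trans
      (MeasurableEquiv.toLp 2 (Fin 2 → ℝ))) p = !₂[p.1, p.2] := fun p => rfl
  simp only [Function.comp_def, hcomp] at hintegr₂ ⊢
  rw [Measure.volume_eq_prod] at hintegr₂ ⊢
  rw [integral_prod_symm _ hintegr₂]
  have hsq : ∀ x y : ℝ, Real.exp (-(a * x ^ 2 + 2 * b * x * y + d * y ^ 2)) =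
      Real.exp (-a * (x + b / a * y) ^ 2) * Real.exp (-((a * d - b ^ 2) / a) * y ^ 2) := by
    intro x y
    rw [← Real.exp_add]
    congr 1
    field_simp
    ring
  simp only [Matrix.cons_val_zero, Matrix.cons_val_one, hsq]
  simp only [integral_mul_const]
  simp only [integral_add_right_eq_self (fun x : ℝ => Real.exp (-a * x ^ 2)),
    integral_const_mul, integral_gaussian]
  rw [← Real.sqrt_mul (by positivity), show (-(1 : ℝ) / 2) = -(1 / 2) by ring,
    Real.rpow_neg hD.le, ← Real.sqrt_eq_rpow,
    show Real.pi / a * (Real.pi / ((a * d - b ^ 2) / a)) = Real.pi ^ 2 / (a * d - b ^ 2) by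
      field_simp, Real.sqrt_div (by positivity), Real.sqrt_sq Real.pi_pos.le, div_eq_mul_inv]

/-- The second derivative on the diagonal, in terms of the entries of the Hessian matrix. -/
theorem fderiv_fderiv_apply_self {ψ : E2 → ℝ} {x : E2} (hψ : ContDiffAt ℝ 2 ψ x) (v : E2) :
    fderiv ℝ (fderiv ℝ ψ) x v v =
      hess ψ x 0 0 * v 0 ^ 2 + 2 * hess ψ x 0 1 * v 0 * v 1 + hess ψ x 1 1 * v 1 ^ 2 := by
  have hd : DifferentiableAt ℝ (fderiv ℝ ψ) x :=
    (hψ.fderiv_right (m := 1) (by norm_num)).differentiableAt (by norm_num)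
  have hent : ∀ i j, hess ψ x i j = fderiv ℝ (fderiv ℝ ψ) x (EuclideanSpace.single i 1)
      (EuclideanSpace.single j 1) := by
    intro i j
    have h := (hd.hasFDerivAt.clm_apply
      (hasFDerivAt_const (EuclideanSpace.single j (1 : ℝ)) x)).fderiv
    simp only [hess, Matrix.of_apply, pdR]
    unfold pdR
    rw [h]
    simp
  have hv : v = v 0 • EuclideanSpace.single 0 (1 : ℝ) + v 1 • EuclideanSpace.single 1 (1 : ℝ) := by
    ext i
    fin_cases i <;> simp
  have hsymm := hψ.isSymmSndFDerivAt (by simp) (EuclideanSpace.single 0 (1 : ℝ))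
    (EuclideanSpace.single 1 (1 : ℝ))
  rw [hent, hent, hent]
  conv_lhs => rw [hv]
  simp only [map_add, map_smul, add_apply, smul_apply,
    smul_eq_mul, hsymm]
  ring

/-- Quadratic growth at a strict minimum on a closed ball: the Taylor expansion gives it near the
minimum, compactness away from it. -/
theorem exists_quadratic_growth {ψ : E2 → ℝ} {x₀ : E2} {ε : ℝ} (hε : 0 < ε)
    (hcont : ContinuousOn ψ (Metric.closedBall x₀ ε))
    (hmin : ∀ x ∈ Metric.closedBall x₀ ε, x ≠ x₀ → ψ x₀ < ψ x)
    {q : E2 → ℝ} {l : ℝ} (hl : 0 < l) (hq : ∀ v, l * ‖v‖ ^ 2 ≤ q v)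
    (hT : (fun x => ψ x - ψ x₀ - (1 / 2) * q (x - x₀)) =o[𝓝 x₀] fun x => ‖x - x₀‖ ^ 2) :
    ∃ c > 0, ∀ x ∈ Metric.closedBall x₀ ε, c * ‖x - x₀‖ ^ 2 ≤ ψ x - ψ x₀ := by
  obtain ⟨r, hr, hnear⟩ := Metric.eventually_nhds_iff_ball.1
    (Asymptotics.isLittleO_iff.1 hT (c := l / 4) (by positivity))
  have hnear' : ∀ x ∈ Metric.ball x₀ r, l / 4 * ‖x - x₀‖ ^ 2 ≤ ψ x - ψ x₀ := by
    intro x hx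
    have h1 := hnear x hx
    rw [norm_pow, norm_norm, Real.norm_eq_abs] at h1
    linarith [(abs_le.1 h1).1, hq (x - x₀)]
  set K := Metric.closedBall x₀ ε \ Metric.ball x₀ r with hK
  have hKc : IsCompact K := (isCompact_closedBall x₀ ε).diff Metric.isOpen_ball
  obtain ⟨m, hm, hfar⟩ : ∃ m > 0, ∀ x ∈ K, m ≤ ψ x - ψ x₀ := by
    rcases K.eq_empty_or_nonempty with h | h
    · exact ⟨1, one_pos, by simp [h]⟩
    · obtain ⟨z, hz, hzmin⟩ := hKc.exists_isMinOn h (hcont.mono Set.sdiff_subset)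
      refine ⟨ψ z - ψ x₀, sub_pos.2 (hmin z hz.1 ?_), fun x hx => ?_⟩
      · rintro rfl
        exact hz.2 (Metric.mem_ball_self hr)
      · exact sub_le_sub_right (hzmin hx) _
  refine ⟨min (l / 4) (m / ε ^ 2), by positivity, fun x hx => ?_⟩
  by_cases hxr : x ∈ Metric.ball x₀ r
  · refine le_trans ?_ (hnear' x hxr)
    gcongr
    exact min_le_left _ _
  · refine le_trans ?_ (hfar x ⟨hx, hxr⟩)
    calc min (l / 4) (m / ε ^ 2) * ‖x - x₀‖ ^ 2 ≤ m / ε ^ 2 * ε ^ 2 := by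
          gcongr
          · exact min_le_right _ _
          · simpa [dist_eq_norm] using hx
      _ = m := by field_simp

/-- The substitution `x = x₀ + √h y`. -/
theorem rescale_integral (F : E2 → ℝ) (x₀ : E2) {h : ℝ} (hh : 0 < h) :
    (1 / h) * ∫ x, F x = ∫ y, F (x₀ + √h • y) := by
  rw [Measure.integral_comp_smul volume (fun z => F (x₀ + z)) (√h), integral_add_left_eq_self F]
  simp [Real.sq_sqrt hh.le, abs_of_pos hh]

/-- Laplace method: if `ψ` has a unique minimum at `x₀` in the closed disk of
radius `ε`, with positive definite Hessian, then
`(1/h)∫_{D(x₀,ε)} e^{−2(ψ−ψ(x₀))/h} → π (det Hess ψ(x₀))^{−1/2}` as `h → 0⁺`. -/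
theorem stmt15 (U : Set E2) (hU : IsOpen U)
    (ψ : E2 → ℝ) (hψ : ContDiffOn ℝ 2 ψ U)
    (x₀ : E2) (hx₀ : x₀ ∈ U) (ε : ℝ) (hε : 0 < ε)
    (hball : Metric.closedBall x₀ ε ⊆ U)
    (hmin : ∀ x ∈ Metric.closedBall x₀ ε, x ≠ x₀ → ψ x₀ < ψ x)
    (hpos : (hess ψ x₀).PosDef) :
    Tendsto
      (fun h : ℝ => (1 / h) *
        ∫ x in Metric.ball x₀ ε, Real.exp (-2 * (ψ x - ψ x₀) / h))
      (𝓝[>] 0) (𝓝 (Real.pi * (hess ψ x₀).det ^ (-(1:ℝ)/2))) := by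
  have hcd : ContDiffAt ℝ 2 ψ x₀ := hψ.contDiffAt (hU.mem_nhds hx₀)
  have hcont : ContinuousOn ψ (Metric.closedBall x₀ ε) := hψ.continuousOn.mono hball
  have hcrit : fderiv ℝ ψ x₀ = 0 := by
    apply IsLocalMin.fderiv_eq_zero
    filter_upwards [Metric.closedBall_mem_nhds x₀ hε] with x hx
    rcases eq_or_ne x x₀ with rfl | hne
    · exact le_rfl
    · exact (hmin x hx hne).le
  set a := hess ψ x₀ 0 0 with ha_def
  set b := hess ψ x₀ 0 1 with hb_def
  set d := hess ψ x₀ 1 1 with hd_def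
  have hdet : (hess ψ x₀).det = a * d - b ^ 2 := by
    have hs : hess ψ x₀ 1 0 = b := by simpa using hpos.isHermitian.apply 0 1
    rw [Matrix.det_fin_two, hs, sq]
  have ha : 0 < a := hpos.diag_pos
  have hD : 0 < a * d - b ^ 2 := hdet ▸ hpos.det_pos
  have hd : 0 < d := hpos.diag_pos
  have hT := taylor_two_isLittleO hcd hcrit
  simp only [fderiv_fderiv_apply_self hcd, ← ha_def, ← hb_def, ← hd_def] at hT
  obtain ⟨c, hc, hgrow⟩ := exists_quadratic_growth hε hcont hmin
    (q := fun v => a * v 0 ^ 2 + 2 * b * v 0 * v 1 + d * v 1 ^ 2)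
    (l := (a * d - b ^ 2) / (a + d)) (by positivity) (quad_lower_bound ha hD) hT
  rw [hdet, ← integral_exp_neg_quad ha hD]
  have hmeas : ∀ h : ℝ, Measurable ((Metric.ball x₀ ε).indicator
      fun x => Real.exp (-2 * (ψ x - ψ x₀) / h)) := by
    intro h
    classical
    rw [← Set.piecewise_eq_indicator]
    refine ContinuousOn.measurable_piecewise ?_ continuousOn_const measurableSet_ball
    have := hcont.mono Metric.ball_subset_closedBall
    fun_prop
  have hresc : ∀ᶠ h : ℝ in 𝓝[>] 0,
      ∫ y, (Metric.ball x₀ ε).indicator (fun x => Real.exp (-2 * (ψ x - ψ x₀) / h)) (x₀ + √h • y) =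
      (1 / h) * ∫ x in Metric.ball x₀ ε, Real.exp (-2 * (ψ x - ψ x₀) / h) := by
    filter_upwards [self_mem_nhdsWithin] with h hh
    rw [← integral_indicator measurableSet_ball, rescale_integral _ x₀ hh]
  refine Tendsto.congr' hresc ?_
  refine tendsto_integral_filter_of_dominated_convergence
    (fun y => Real.exp (-(2 * c) * ‖y‖ ^ 2)) ?_ ?_
    (integrable_exp_neg_mul_norm_sq (by positivity)) ?_
  · exact Eventually.of_forall fun h =>
      ((hmeas h).comp (by fun_prop : Measurable fun y : E2 => x₀ + √h • y)).aestronglyMeasurable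
  · filter_upwards [self_mem_nhdsWithin] with h hh
    have hh : 0 < h := hh
    refine ae_of_all _ fun y => ?_
    by_cases hy : x₀ + √h • y ∈ Metric.ball x₀ ε
    · rw [Set.indicator_of_mem hy, Real.norm_eq_abs, Real.abs_exp, Real.exp_le_exp]
      have h1 := hgrow _ (Metric.ball_subset_closedBall hy)
      rw [add_sub_cancel_left, norm_smul, mul_pow, Real.norm_eq_abs, sq_abs,
        Real.sq_sqrt hh.le] at h1
      rw [div_le_iff₀ hh]
      linarith
    · rw [Set.indicator_of_notMem hy, norm_zero]
      positivity
  · refine ae_of_all _ fun y => ?_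
    have hlim : Tendsto (fun h : ℝ => x₀ + √h • y) (𝓝[>] 0) (𝓝 x₀) := by
      have : Continuous fun h : ℝ => x₀ + √h • y := by fun_prop
      simpa using (this.tendsto 0).mono_left nhdsWithin_le_nhds
    have hin : ∀ᶠ h : ℝ in 𝓝[>] 0, x₀ + √h • y ∈ Metric.ball x₀ ε :=
      hlim (Metric.ball_mem_nhds x₀ hε)
    -- Along `x₀ + √h y` the Taylor remainder is `o(h)`.
    have ho : Tendsto (fun h : ℝ => (ψ (x₀ + √h • y) - ψ x₀ - (1 / 2) *
        (h * (a * y 0 ^ 2 + 2 * b * y 0 * y 1 + d * y 1 ^ 2))) / h) (𝓝[>] 0) (𝓝 0) := by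
      refine Asymptotics.IsLittleO.tendsto_div_nhds_zero ?_
      refine ((hT.comp_tendsto hlim).congr' ?_ ?_).trans_isBigO
        (Asymptotics.isBigO_const_mul_self (‖y‖ ^ 2) (fun h : ℝ => h) (𝓝[>] 0))
      · filter_upwards [self_mem_nhdsWithin] with h hh
        have hh : √h ^ 2 = h := Real.sq_sqrt (le_of_lt hh)
        simp only [Function.comp_apply, add_sub_cancel_left, PiLp.smul_apply, smul_eq_mul]
        linear_combination (-(1 / 2) * (a * y 0 ^ 2 + 2 * b * y 0 * y 1 + d * y 1 ^ 2)) * hh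
      · filter_upwards [self_mem_nhdsWithin] with h hh
        have hh : √h ^ 2 = h := Real.sq_sqrt (le_of_lt hh)
        simp only [Function.comp_apply, add_sub_cancel_left, norm_smul, mul_pow, Real.norm_eq_abs,
          sq_abs, hh]
        ring
    have hexp := (Real.continuous_exp.tendsto _).comp
      ((ho.const_mul (-2)).sub_const (a * y 0 ^ 2 + 2 * b * y 0 * y 1 + d * y 1 ^ 2))
    rw [mul_zero, zero_sub] at hexp
    refine hexp.congr' ?_
    filter_upwards [self_mem_nhdsWithin, hin] with h hh hy
    have hh : h ≠ 0 := ne_of_gt hh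
    rw [Set.indicator_of_mem hy, Function.comp_apply]
    congr 1
    field_simp
    ring
end
end

section
/- Let Ω ⊂ ℝ² be a nonempty bounded open strictly convex set, and let ψ be continuous on the closure of Ω, smooth on Ω, with Δψ = 1 in Ω and ψ = 0 on ∂Ω. Then there exists a unique point x₀ ∈ Ω such that ψ(x₀) = inf_Ω ψ. -/
/-!
`ψ` is negative in `Ω` by the maximum principle, so its minimum over the compact closure is attained
in `Ω`. Uniqueness rests on the concavity of `w = (-ψ) ^ (1 / 3)`, proved by a Korevaar–Kennington
concavity maximum principle: the function `C (x, y) = (w x + w y) / 2 - w ((x + y) / 2)` has no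
positive maximum over pairs of points of the closure.

* At a pair of interior points (`no_interior_max`), `Δw = -(1 + 6 w |∇w|²) / (3 w²)`, and the
  reciprocal `3 w² / (1 + 6 |p|² w)` is strictly increasing and convex in `w`; this contradicts the
  second-order condition for a maximum of `C`, tested with suitably scaled displacements.
* If `x` is a boundary point (`no_boundary_max`), inscribed balls give `-ψ ≥ c t²` at distance
  proportional to `t` from `x` along the segment to the midpoint, without any regularity of the
  boundary. Hence `w` grows at least like `t ^ (2 / 3)` there and moving `x` inwards increases `C`.
  The square root, the usual choice, lacks this infinite slope at corners.

Concavity makes the set of minimum points closed under midpoints, so two distinct minimum points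
produce a sequence of minimum points on a line accumulating at one of them. As `ψ - |x|² / 4` is
harmonic, `ψ` is real-analytic, hence constant along that line up to the boundary, where `ψ = 0`
(`no_accumulating_min`): a contradiction.
-/

open MeasureTheory Filter Topology

noncomputable section

/-! ### Derivatives along coordinate lines and the maximum principle -/

/-- First- and second-order necessary conditions at a local maximum of a function of one variable. -/
lemma second_deriv_nonpos {φ φ1 : ℝ → ℝ} {d : ℝ} (hmax : IsLocalMax φ 0)
    (h1 : ∀ᶠ τ in 𝓝 (0 : ℝ), HasDerivAt φ (φ1 τ) τ) (h2 : HasDerivAt φ1 d 0) :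
    φ1 0 = 0 ∧ d ≤ 0 := by
  have e0 : φ1 0 = 0 := hmax.hasDerivAt_eq_zero h1.self_of_nhds
  refine ⟨e0, ?_⟩
  by_contra hd
  push Not at hd
  have hde : deriv φ =ᶠ[𝓝 0] φ1 := h1.mono fun τ h => h.deriv
  have hdd : deriv (deriv φ) 0 = d := by rw [hde.deriv_eq, h2.deriv]
  have hmin : IsLocalMin φ 0 := isLocalMin_of_deriv_deriv_pos (by rw [hdd]; exact hd)
    (by rw [hde.self_of_nhds, e0]) h1.self_of_nhds.continuousAt
  have hc : φ =ᶠ[𝓝 0] fun _ => φ 0 := by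
    filter_upwards [hmax, hmin] with τ a b using le_antisymm a b
  have h3 : deriv (deriv φ) 0 = 0 := by
    rw [hc.deriv.deriv_eq]; simp
  linarith

lemma hasDerivAt_line (i : Fin 2) {f : E2 → ℝ} {x : E2} {c τ : ℝ}
    (hf : DifferentiableAt ℝ f (x + (τ * c) • EuclideanSpace.single i (1 : ℝ))) :
    HasDerivAt (fun τ : ℝ => f (x + (τ * c) • EuclideanSpace.single i (1 : ℝ)))
      (c * pdR i f (x + (τ * c) • EuclideanSpace.single i (1 : ℝ))) τ := by
  have h1 : HasDerivAt (fun τ : ℝ => x + (τ * c) • EuclideanSpace.single i (1 : ℝ))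
      (c • EuclideanSpace.single i (1 : ℝ)) τ := by
    have := (((hasDerivAt_id τ).mul_const c).smul_const
      (EuclideanSpace.single i (1 : ℝ))).const_add x
    simpa using this
  exact (hf.hasFDerivAt.comp_hasDerivAt τ h1).congr_deriv (by simp [pdR])

lemma ContDiffAt.pdR_differentiableAt {f : E2 → ℝ} {x : E2} (hf : ContDiffAt ℝ 2 f x)
    (i : Fin 2) : DifferentiableAt ℝ (pdR i f) x := by
  have : ContDiffAt ℝ 1 (fderiv ℝ f) x := hf.fderiv_right (by norm_num)
  exact (this.differentiableAt (by norm_num)).clm_apply (differentiableAt_const _)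

lemma tendsto_line (x e : E2) (c : ℝ) :
    Tendsto (fun τ : ℝ => x + (τ * c) • e) (𝓝 0) (𝓝 x) := by
  have : Continuous (fun τ : ℝ => x + (τ * c) • e) := by fun_prop
  simpa using this.tendsto 0

lemma eventually_hasDerivAt_line (i : Fin 2) {f : E2 → ℝ} {x : E2} (c : ℝ)
    (hf : ContDiffAt ℝ 2 f x) :
    ∀ᶠ τ in 𝓝 (0 : ℝ), HasDerivAt (fun τ : ℝ => f (x + (τ * c) • EuclideanSpace.single i (1 : ℝ)))
      (c * pdR i f (x + (τ * c) • EuclideanSpace.single i (1 : ℝ))) τ := by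
  have h := hf.eventually (by simp)
  filter_upwards [(tendsto_line x (EuclideanSpace.single i (1 : ℝ)) c).eventually h] with τ hτ
  exact hasDerivAt_line i (hτ.differentiableAt (by norm_num))

/-- The derivative at `0` of the first derivative of `f` along a coordinate line run at speed `c`. -/
lemma hasDerivAt_line_second (i : Fin 2) {f : E2 → ℝ} {x : E2} (c : ℝ)
    (hf : ContDiffAt ℝ 2 f x) :
    HasDerivAt (fun τ : ℝ => c * pdR i f (x + (τ * c) • EuclideanSpace.single i (1 : ℝ)))
      (c ^ 2 * pdR i (pdR i f) x) 0 := by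
  exact ((hasDerivAt_line i (f := pdR i f) (x := x) (c := c) (τ := 0)
    (by simpa using hf.pdR_differentiableAt i)).const_mul c).congr_deriv (by simp; ring)

lemma lapl_nonpos_of_isLocalMax {f : E2 → ℝ} {x : E2} (hf : ContDiffAt ℝ 2 f x)
    (hmax : IsLocalMax f x) : lapl f x ≤ 0 := by
  have key : ∀ i, pdR i (pdR i f) x ≤ 0 := fun i => by
    have hm : IsLocalMax (fun τ : ℝ => f (x + (τ * 1) • EuclideanSpace.single i (1 : ℝ))) 0 := by
      have := (tendsto_line x (EuclideanSpace.single i (1 : ℝ)) 1).eventually hmax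
      simpa [IsLocalMax, IsMaxFilter] using this
    have := (second_deriv_nonpos hm (eventually_hasDerivAt_line i 1 hf)
      (hasDerivAt_line_second i 1 hf)).2
    simpa using this
  exact add_nonpos (key 0) (key 1)

/-- Weak maximum principle for strictly subharmonic functions. -/
lemma nonpos_of_lapl_pos {U : Set E2} (hU : IsOpen U) (hb : Bornology.IsBounded U)
    {f : E2 → ℝ} (hc : ContinuousOn f (closure U)) (hs : ∀ x ∈ U, ContDiffAt ℝ 2 f x)
    (hl : ∀ x ∈ U, 0 < lapl f x) (hbd : ∀ x ∈ frontier U, f x ≤ 0) :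
    ∀ x ∈ closure U, f x ≤ 0 := by
  intro x hx
  obtain ⟨m, hm, hmax⟩ := hb.isCompact_closure.exists_isMaxOn ⟨x, hx⟩ hc
  refine (hmax hx).trans ?_
  by_cases hmU : m ∈ U
  · have : IsLocalMax f m :=
      hmax.isLocalMax (mem_of_superset (hU.mem_nhds hmU) subset_closure)
    exact absurd (lapl_nonpos_of_isLocalMax (hs m hmU) this) (not_le.2 (hl m hmU))
  · exact hbd m (by rw [hU.frontier_eq]; exact ⟨hm, hmU⟩)

/-- The radial quadratic polynomial `y ↦ c |y - a|² + d`, whose Laplacian is `4 c`. It serves as a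
barrier on balls and, with `c = 1/4`, as a particular solution of `Δf = 1`. -/
def quad (c d : ℝ) (a : E2) (y : E2) : ℝ := c * ((y 0 - a 0) ^ 2 + (y 1 - a 1) ^ 2) + d

lemma contDiff_quad (c d : ℝ) (a : E2) : ContDiff ℝ 2 (quad c d a) := by
  unfold quad
  fun_prop

lemma pdR_quad (c d : ℝ) (a : E2) (i : Fin 2) (y : E2) :
    pdR i (quad c d a) y = 2 * c * (y i - a i) := by
  have h := hasDerivAt_line i (f := quad c d a) (x := y) (c := 1) (τ := 0)
    ((contDiff_quad c d a).differentiable (by norm_num) _)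
  have h2 : HasDerivAt (fun τ : ℝ => quad c d a (y + (τ * 1) • EuclideanSpace.single i (1 : ℝ)))
      (2 * c * (y i - a i)) 0 := by
    have e : (fun τ : ℝ => quad c d a (y + (τ * 1) • EuclideanSpace.single i (1 : ℝ))) =
        fun τ => quad c d a y + 2 * c * (y i - a i) * τ + c * τ ^ 2 := by
      funext τ
      fin_cases i <;> simp [quad] <;> ring
    rw [e]
    exact ((((hasDerivAt_id (0 : ℝ)).const_mul (2 * c * (y i - a i))).const_add
      (quad c d a y)).add (((hasDerivAt_id (0 : ℝ)).pow 2).const_mul c)).congr_deriv (by simp)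
  simpa using h.unique h2

lemma pdR_sub {f g : E2 → ℝ} {x : E2} (i : Fin 2) (hf : DifferentiableAt ℝ f x)
    (hg : DifferentiableAt ℝ g x) : pdR i (f - g) x = pdR i f x - pdR i g x := by
  simp [pdR, fderiv_sub hf hg]

lemma Filter.EventuallyEq.pdR_eq {f g : E2 → ℝ} {x : E2} (h : f =ᶠ[𝓝 x] g) (i : Fin 2) :
    pdR i f x = pdR i g x := by
  simp [pdR, h.fderiv_eq]

lemma lapl_sub_quad {f : E2 → ℝ} {x : E2} (hf : ContDiffAt ℝ 2 f x) (c d : ℝ) (a : E2) :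
    lapl (f - quad c d a) x = lapl f x - 4 * c := by
  have key : ∀ i, pdR i (pdR i (f - quad c d a)) x = pdR i (pdR i f) x - 2 * c := fun i => by
    have h1 : pdR i (f - quad c d a) =ᶠ[𝓝 x] pdR i f - pdR i (quad c d a) := by
      filter_upwards [hf.eventually (by simp)] with y hy
      exact pdR_sub i (hy.differentiableAt (by norm_num))
        ((contDiff_quad c d a).differentiable (by norm_num) _)
    rw [h1.pdR_eq, pdR_sub i (hf.pdR_differentiableAt i)
      ((contDiff_quad c d a).contDiffAt.pdR_differentiableAt i)]
    congr 1
    have h2 : pdR i (quad c d a) = fun y => 2 * c * (y i - a i) := funext (pdR_quad c d a i)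
    have h3 : HasDerivAt (fun τ : ℝ =>
        pdR i (quad c d a) (x + (τ * 1) • EuclideanSpace.single i (1 : ℝ))) (2 * c) 0 := by
      have e : (fun τ : ℝ => pdR i (quad c d a) (x + (τ * 1) • EuclideanSpace.single i (1 : ℝ))) =
          fun τ => 2 * c * (τ + (x i - a i)) := by
        funext τ
        simp only [h2, PiLp.add_apply, PiLp.smul_apply, PiLp.single_apply]
        simp
        left; ring
      rw [e]
      exact (((hasDerivAt_id (0 : ℝ)).add_const (x i - a i)).const_mul (2 * c)).congr_deriv
        (by simp)
    have h := hasDerivAt_line i (f := pdR i (quad c d a)) (x := x) (c := 1) (τ := 0)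
      ((contDiff_quad c d a).contDiffAt.pdR_differentiableAt i)
    simpa using h.unique h3
  simp only [lapl, key]; ring

lemma quad_eq_norm (c d : ℝ) (a y : E2) : quad c d a y = c * ‖y - a‖ ^ 2 + d := by
  simp [quad, EuclideanSpace.norm_sq_eq, Fin.sum_univ_two]

/-- Comparison with `(|y - x|² - r²) / 8` on an inscribed ball. The sharp constant would be `1/4`;
with `1/8` the difference is strictly subharmonic, so the weak maximum principle suffices. -/
lemma le_neg_sq_of_ball {Ω : Set E2} {ψ : E2 → ℝ} (hψc : ContinuousOn ψ (closure Ω))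
    (hs : ∀ x ∈ Ω, ContDiffAt ℝ 2 ψ x) (hΔ : ∀ x ∈ Ω, lapl ψ x = 1)
    (hle : ∀ x ∈ closure Ω, ψ x ≤ 0) {x : E2} {r : ℝ} (hr : 0 < r)
    (hB : Metric.ball x r ⊆ Ω) : ψ x ≤ -(r ^ 2 / 8) := by
  have hcl : closure (Metric.ball x r) ⊆ closure Ω := closure_mono hB
  have := nonpos_of_lapl_pos (f := ψ - quad (1 / 8) (-(r ^ 2 / 8)) x) Metric.isOpen_ball
    Metric.isBounded_ball ((hψc.mono hcl).sub (contDiff_quad _ _ _).continuous.continuousOn)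
    (fun y hy => (hs y (hB hy)).sub (contDiff_quad _ _ _).contDiffAt)
    (fun y hy => by rw [lapl_sub_quad (hs y (hB hy)), hΔ y (hB hy)]; norm_num)
    (fun y hy => by
      have h1 := hle y (hcl hy.1)
      rw [frontier_ball x hr.ne', mem_sphere_iff_norm] at hy
      simp only [Pi.sub_apply, quad_eq_norm, hy]
      linarith) x (subset_closure (Metric.mem_ball_self hr))
  simp only [Pi.sub_apply, quad_eq_norm, sub_self, norm_zero] at this
  linarith

/-- The equation satisfied by `w` when `ψ = -w³`. -/
lemma lapl_eq_of_cube {ψ w : E2 → ℝ} {x : E2} (hw : ContDiffAt ℝ 2 w x)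
    (h : ψ =ᶠ[𝓝 x] fun y => -(w y) ^ 3) :
    lapl ψ x = -(3 * w x ^ 2 * lapl w x + 6 * w x * (pdR 0 w x ^ 2 + pdR 1 w x ^ 2)) := by
  have key : ∀ i, pdR i (pdR i ψ) x =
      -(3 * w x ^ 2 * pdR i (pdR i w) x + 6 * w x * pdR i w x ^ 2) := fun i => by
    have h1 : pdR i ψ =ᶠ[𝓝 x] fun y => -(3 * w y ^ 2 * pdR i w y) := by
      filter_upwards [hw.eventually (by simp), h.eventually_nhds] with y hy hy2
      have hd := ((hy.differentiableAt (by norm_num)).hasFDerivAt.pow 3).neg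
      rw [Filter.EventuallyEq.pdR_eq hy2 i, pdR]
      have hd' : HasFDerivAt (fun y => -(w y) ^ 3) _ y := hd
      rw [hd'.fderiv]
      simp [pdR]
    rw [h1.pdR_eq, pdR]
    have hd := (((((hw.differentiableAt (by norm_num)).hasFDerivAt.pow 2).const_mul 3).mul
      (hw.pdR_differentiableAt i).hasFDerivAt).neg)
    have hd' : HasFDerivAt (fun y => -(3 * w y ^ 2 * pdR i w y)) _ x := hd
    rw [hd'.fderiv]
    simp [pdR]; ring
  simp only [lapl, key]; ring

/-! ### The concavity maximum principle -/

/-- The algebra behind the concavity maximum principle. With `W ↦ 3 W² / (1 + 6 P W) = -1/Q`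
strictly increasing and convex, choosing `s = -1/Q1`, `t = -1/Q2` in the quadratic form yields
`-1/Q3 ≥ (-1/Q1 - 1/Q2) / 2`, which contradicts `W3 < (W1 + W2) / 2`. -/
lemma harmonic_mean_contra {W1 W2 W3 P Q1 Q2 Q3 : ℝ} (h1 : 0 < W1) (h2 : 0 < W2) (h3 : 0 < W3)
    (hP : 0 ≤ P) (hlt : W3 < (W1 + W2) / 2)
    (e1 : 1 = -(3 * W1 ^ 2 * Q1 + 6 * W1 * P)) (e2 : 1 = -(3 * W2 ^ 2 * Q2 + 6 * W2 * P))
    (e3 : 1 = -(3 * W3 ^ 2 * Q3 + 6 * W3 * P))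
    (hq : ∀ s t : ℝ, s ^ 2 * Q1 / 2 + t ^ 2 * Q2 / 2 - ((s + t) / 2) ^ 2 * Q3 ≤ 0) : False := by
  have p1 : 0 < 1 + 6 * W1 * P := by positivity
  have p2 : 0 < 1 + 6 * W2 * P := by positivity
  have p3 : 0 < 1 + 6 * W3 * P := by positivity
  have r1 : Q1 = -((1 + 6 * W1 * P) / (3 * W1 ^ 2)) := by field_simp; linarith
  have r2 : Q2 = -((1 + 6 * W2 * P) / (3 * W2 ^ 2)) := by field_simp; linarith
  have r3 : Q3 = -((1 + 6 * W3 * P) / (3 * W3 ^ 2)) := by field_simp; linarith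
  set s := 3 * W1 ^ 2 / (1 + 6 * W1 * P) with hs
  set t := 3 * W2 ^ 2 / (1 + 6 * W2 * P) with ht
  set c := 3 * W3 ^ 2 / (1 + 6 * W3 * P) with hc
  have sp : 0 < s := by positivity
  have tp : 0 < t := by positivity
  have cp : 0 < c := by positivity
  have q1 : Q1 = -(1 / s) := by rw [r1, hs]; field_simp
  have q2 : Q2 = -(1 / t) := by rw [r2, ht]; field_simp
  have q3 : Q3 = -(1 / c) := by rw [r3, hc]; field_simp
  have h := hq s t
  rw [q1, q2, q3] at h
  have h' : (s + t) / 2 ≤ c := by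
    have e : s ^ 2 * -(1 / s) / 2 + t ^ 2 * -(1 / t) / 2 - ((s + t) / 2) ^ 2 * -(1 / c)
        = (s + t) / 2 * ((s + t) / 2 - c) / c := by field_simp; ring
    rw [e] at h
    by_contra hcon
    push Not at hcon
    have : 0 < (s + t) / 2 * ((s + t) / 2 - c) / c := by
      have : 0 < (s + t) / 2 - c := by linarith
      positivity
    linarith
  -- tangent-line inequality for the convex function `W ↦ 3 W² / (1 + 6 P W)` at the mean
  set m := (W1 + W2) / 2 with hm
  have mp : 0 < m := by positivity
  have pm : 0 < 1 + 6 * m * P := by positivity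
  set k := (6 * m + 18 * P * m ^ 2) / (1 + 6 * m * P) ^ 2 with hk
  have tang : ∀ W : ℝ, 0 < W →
      3 * m ^ 2 / (1 + 6 * m * P) + k * (W - m) ≤ 3 * W ^ 2 / (1 + 6 * W * P) := by
    intro W hW
    have pW : 0 < 1 + 6 * W * P := by positivity
    have : 3 * W ^ 2 / (1 + 6 * W * P) - (3 * m ^ 2 / (1 + 6 * m * P) + k * (W - m))
        = 3 * (W - m) ^ 2 / ((1 + 6 * W * P) * (1 + 6 * m * P) ^ 2) := by
      rw [hk]; field_simp; ring
    have h0 : 0 ≤ 3 * (W - m) ^ 2 / ((1 + 6 * W * P) * (1 + 6 * m * P) ^ 2) := by positivity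
    linarith
  have t1 := tang W1 h1
  have t2 := tang W2 h2
  have hcm : c < 3 * m ^ 2 / (1 + 6 * m * P) := by
    rw [hc, div_lt_div_iff₀ p3 pm]
    have a : W3 ^ 2 < m ^ 2 := by gcongr
    have b : 0 ≤ W3 * m * P * (m - W3) := by
      have : 0 ≤ m - W3 := by linarith
      positivity
    nlinarith
  have hmk : k * (W1 - m) + k * (W2 - m) = 0 := by rw [hm]; ring
  linarith

/-- The concavity function `(w x + w y) / 2 - w ((x + y) / 2)` has no positive local maximum at a
pair of interior points. There the gradients of `w` at `x`, `y` and the midpoint agree, and the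
Hessian condition is tested on the displacements `(s e, t e)` with `e` a coordinate vector. -/
lemma no_interior_max {w ψ : E2 → ℝ} {x y z : E2} (hz : z = (2⁻¹ : ℝ) • (x + y))
    (hx : ContDiffAt ℝ 2 w x) (hy : ContDiffAt ℝ 2 w y) (hwz : ContDiffAt ℝ 2 w z)
    (px : 0 < w x) (py : 0 < w y) (pz : 0 < w z)
    (cx : ψ =ᶠ[𝓝 x] fun p => -(w p) ^ 3) (cy : ψ =ᶠ[𝓝 y] fun p => -(w p) ^ 3)
    (cz : ψ =ᶠ[𝓝 z] fun p => -(w p) ^ 3)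
    (lx : lapl ψ x = 1) (ly : lapl ψ y = 1) (lz : lapl ψ z = 1)
    (hpos : w z < (w x + w y) / 2)
    (hmax : ∀ᶠ q : E2 × E2 in 𝓝 (x, y),
      (w q.1 + w q.2) / 2 - w ((2⁻¹ : ℝ) • (q.1 + q.2)) ≤ (w x + w y) / 2 - w z) : False := by
  have key : ∀ (i : Fin 2) (s t : ℝ),
      s * pdR i w x / 2 + t * pdR i w y / 2 - (s + t) / 2 * pdR i w z = 0 ∧
      s ^ 2 * pdR i (pdR i w) x / 2 + t ^ 2 * pdR i (pdR i w) y / 2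
        - ((s + t) / 2) ^ 2 * pdR i (pdR i w) z ≤ 0 := by
    intro i s t
    set e : E2 := EuclideanSpace.single i (1 : ℝ) with he
    have hm : IsLocalMax (fun τ : ℝ => (w (x + (τ * s) • e) + w (y + (τ * t) • e)) / 2
        - w (z + (τ * ((s + t) / 2)) • e)) 0 := by
      have ht : Tendsto (fun τ : ℝ => (x + (τ * s) • e, y + (τ * t) • e)) (𝓝 0) (𝓝 (x, y)) :=
        (tendsto_line x e s).prodMk_nhds (tendsto_line y e t)
      filter_upwards [ht.eventually hmax] with τ hτ
      have e1 : (2⁻¹ : ℝ) • (x + (τ * s) • e + (y + (τ * t) • e))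
          = z + (τ * ((s + t) / 2)) • e := by rw [hz]; module
      simpa [e1] using hτ
    have h1 : ∀ᶠ τ in 𝓝 (0 : ℝ), HasDerivAt (fun τ : ℝ =>
        (w (x + (τ * s) • e) + w (y + (τ * t) • e)) / 2 - w (z + (τ * ((s + t) / 2)) • e))
        ((s * pdR i w (x + (τ * s) • e) + t * pdR i w (y + (τ * t) • e)) / 2
          - (s + t) / 2 * pdR i w (z + (τ * ((s + t) / 2)) • e)) τ := by
      filter_upwards [eventually_hasDerivAt_line i s hx, eventually_hasDerivAt_line i t hy,
        eventually_hasDerivAt_line i ((s + t) / 2) hwz] with τ a b c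
      exact ((a.add b).div_const 2).sub c
    have h2 := (((hasDerivAt_line_second i s hx).add (hasDerivAt_line_second i t hy)).div_const
      2).sub (hasDerivAt_line_second i ((s + t) / 2) hwz)
    obtain ⟨r1, r2⟩ := second_deriv_nonpos hm h1 h2
    simp only [zero_mul, zero_smul, add_zero] at r1
    constructor <;> linarith
  have gx : ∀ i, pdR i w x = pdR i w z := fun i => by linarith [(key i 1 0).1]
  have gy : ∀ i, pdR i w y = pdR i w z := fun i => by linarith [(key i 0 1).1]
  have ex := lapl_eq_of_cube hx cx
  have ey := lapl_eq_of_cube hy cy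
  have ez := lapl_eq_of_cube hwz cz
  rw [lx, gx, gx] at ex
  rw [ly, gy, gy] at ey
  rw [lz] at ez
  refine harmonic_mean_contra px py pz (by positivity) hpos ex ey ez fun s t => ?_
  have k0 := (key 0 s t).2
  have k1 := (key 1 s t).2
  simp only [lapl]
  linarith

/-- Shrinking a ball in `Ω` towards a boundary point `x` by a factor `t` keeps it in `Ω`. -/
lemma ball_subset_of_segment {Ω : Set E2}
    (hconv : ∀ x ∈ closure Ω, ∀ y ∈ closure Ω, x ≠ y → openSegment ℝ x y ⊆ Ω)
    {x z : E2} (hx : x ∈ closure Ω) (hxΩ : x ∉ Ω) {r t : ℝ} (hB : Metric.ball z r ⊆ Ω)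
    (ht0 : 0 < t) (ht1 : t < 1) : Metric.ball (x + t • (z - x)) (t * r) ⊆ Ω := by
  intro q hq
  set z' : E2 := z + t⁻¹ • (q - (x + t • (z - x))) with hz'
  have hmem : z' ∈ Metric.ball z r := by
    rw [mem_ball_iff_norm] at hq ⊢
    rw [hz', add_sub_cancel_left, norm_smul, norm_inv, Real.norm_of_nonneg ht0.le,
      inv_mul_lt_iff₀ ht0]
    exact hq
  have hne : x ≠ z' := fun h => hxΩ (h ▸ hB hmem)
  refine hconv x hx z' (subset_closure (hB hmem)) hne ⟨1 - t, t, by linarith, ht0, by ring, ?_⟩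
  have : t • z' = t • z + (q - (x + t • (z - x))) := by
    rw [hz', smul_add, smul_smul, mul_inv_cancel₀ ht0.ne', one_smul]
  rw [this]; module

/-- The concavity function is not maximal at a pair `(x, y)` with `x` on the boundary. Moving `x` by
`t` towards the midpoint `z` raises `w` at `x` by at least a multiple of `t ^ (2 / 3)`, since a ball
of radius `t r` fits in `Ω` there, whereas `w` at the midpoint changes only by `O(t)`. -/
lemma no_boundary_max {Ω : Set E2} (hΩo : IsOpen Ω)
    (hconv : ∀ x ∈ closure Ω, ∀ y ∈ closure Ω, x ≠ y → openSegment ℝ x y ⊆ Ω)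
    {w : E2 → ℝ} (hball : ∀ x r, 0 < r → Metric.ball x r ⊆ Ω → r ^ 2 / 8 ≤ w x ^ 3)
    {x y z : E2} (hx : x ∈ closure Ω) (hxΩ : x ∉ Ω) (hwx : w x = 0)
    (hz : z = (2⁻¹ : ℝ) • (x + y)) (hzΩ : z ∈ Ω) (hwz : DifferentiableAt ℝ w z)
    (hmax : ∀ q ∈ closure Ω,
      (w q + w y) / 2 - w ((2⁻¹ : ℝ) • (q + y)) ≤ (w x + w y) / 2 - w z) : False := by
  obtain ⟨r, hr, hB⟩ := Metric.isOpen_iff.1 hΩo z hzΩ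
  set v : E2 := (2⁻¹ : ℝ) • (z - x) with hv
  -- Lipschitz bound for `w` along the segment through `z`
  obtain ⟨K, hKpos, hK⟩ : ∃ K : ℝ, 0 < K ∧ ∀ᶠ t in 𝓝 (0 : ℝ), |w (z + t • v) - w z| ≤ K * |t| := by
    have hd : DifferentiableAt ℝ (fun t : ℝ => w (z + t • v)) 0 := by
      have h0 : DifferentiableAt ℝ w (z + (0 : ℝ) • v) := by simpa using hwz
      exact DifferentiableAt.comp (0 : ℝ) h0 (by fun_prop)
    obtain ⟨K, hK, hK'⟩ := hd.isBigO_sub.exists_pos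
    refine ⟨K, hK, hK'.bound.mono fun t ht => ?_⟩
    simpa using ht
  have hsmall : ∀ᶠ t in 𝓝 (0 : ℝ), t * (8 * K ^ 3) < r ^ 2 / 8 := by
    have : Tendsto (fun t : ℝ => t * (8 * K ^ 3)) (𝓝 0) (𝓝 (0 * (8 * K ^ 3))) :=
      (continuous_id.mul continuous_const).tendsto 0
    exact this.eventually (gt_mem_nhds (by rw [zero_mul]; positivity))
  obtain ⟨t, ⟨⟨ht, hts⟩, ht1⟩, ht0⟩ := ((((hK.and hsmall).and (gt_mem_nhds one_pos)).filter_mono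
    nhdsWithin_le_nhds).and (self_mem_nhdsWithin : Set.Ioi (0 : ℝ) ∈ 𝓝[>] 0)).exists
  have ht0 : 0 < t := ht0
  have hsub := ball_subset_of_segment hconv hx hxΩ hB ht0 ht1
  have hb := hball _ _ (mul_pos ht0 hr) hsub
  have hq := hmax (x + t • (z - x))
    (subset_closure (hsub (Metric.mem_ball_self (mul_pos ht0 hr))))
  have e : (2⁻¹ : ℝ) • (x + t • (z - x) + y) = z + t • v := by
    have : (2⁻¹ : ℝ) • (x + t • (z - x) + y) = (2⁻¹ : ℝ) • (x + y) + t • v := by rw [hv]; module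
    rw [this, ← hz]
  rw [e, hwx] at hq
  have hle := (abs_le.1 ht).2
  rw [abs_of_pos ht0] at hle
  have hub : w (x + t • (z - x)) ≤ 2 * (K * t) := by linarith
  have h3 : w (x + t • (z - x)) ^ 3 ≤ (2 * (K * t)) ^ 3 :=
    (Odd.strictMono_pow (by decide : Odd 3)).monotone hub
  have h4 : t ^ 2 * (r ^ 2 / 8) ≤ t ^ 2 * (t * (8 * K ^ 3)) := by nlinarith
  have := le_of_mul_le_mul_left h4 (by positivity)
  linarith

/-- Midpoint concavity of `w = (-ψ) ^ (1 / 3)` on the closure of `Ω`. -/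
lemma midpoint_concave {Ω : Set E2} (hΩo : IsOpen Ω) (hΩb : Bornology.IsBounded Ω)
    (hconv : ∀ x ∈ closure Ω, ∀ y ∈ closure Ω, x ≠ y → openSegment ℝ x y ⊆ Ω)
    {w ψ : E2 → ℝ} (hwc : ContinuousOn w (closure Ω)) (hws : ∀ x ∈ Ω, ContDiffAt ℝ 2 w x)
    (hwpos : ∀ x ∈ Ω, 0 < w x) (hw0 : ∀ x ∈ frontier Ω, w x = 0)
    (hcube : ∀ x ∈ Ω, ψ x = -(w x) ^ 3) (hΔ : ∀ x ∈ Ω, lapl ψ x = 1)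
    (hball : ∀ x r, 0 < r → Metric.ball x r ⊆ Ω → r ^ 2 / 8 ≤ w x ^ 3) :
    ∀ x ∈ closure Ω, ∀ y ∈ closure Ω, (w x + w y) / 2 ≤ w ((2⁻¹ : ℝ) • (x + y)) := by
  have hmid : ∀ x ∈ closure Ω, ∀ y ∈ closure Ω, x ≠ y → (2⁻¹ : ℝ) • (x + y) ∈ Ω :=
    fun x hx y hy hne => hconv x hx y hy hne
      ⟨2⁻¹, 2⁻¹, by norm_num, by norm_num, by norm_num, by module⟩
  have hmid' : ∀ x ∈ closure Ω, ∀ y ∈ closure Ω, (2⁻¹ : ℝ) • (x + y) ∈ closure Ω := by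
    intro x hx y hy
    by_cases h : x = y
    · have : (2⁻¹ : ℝ) • (x + y) = x := by rw [← h]; module
      rwa [this]
    · exact subset_closure (hmid x hx y hy h)
  intro a ha b hb
  set C : E2 × E2 → ℝ := fun q => (w q.1 + w q.2) / 2 - w ((2⁻¹ : ℝ) • (q.1 + q.2)) with hC
  have hcont : ContinuousOn C (closure Ω ×ˢ closure Ω) := by
    have c1 : ContinuousOn (fun q : E2 × E2 => w q.1) (closure Ω ×ˢ closure Ω) :=
      hwc.comp continuousOn_fst fun q hq => hq.1
    have c2 : ContinuousOn (fun q : E2 × E2 => w q.2) (closure Ω ×ˢ closure Ω) :=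
      hwc.comp continuousOn_snd fun q hq => hq.2
    have c3 : ContinuousOn (fun q : E2 × E2 => w ((2⁻¹ : ℝ) • (q.1 + q.2)))
        (closure Ω ×ˢ closure Ω) :=
      hwc.comp (by fun_prop) fun q hq => hmid' _ hq.1 _ hq.2
    exact ((c1.add c2).div_const 2).sub c3
  obtain ⟨⟨x, y⟩, ⟨hx, hy⟩, hm⟩ := (hΩb.isCompact_closure.prod hΩb.isCompact_closure).exists_isMaxOn
    ⟨(a, b), ha, hb⟩ hcont
  simp only at hx hy
  have hm' : ∀ q ∈ closure Ω, ∀ q' ∈ closure Ω, (w q + w q') / 2 - w ((2⁻¹ : ℝ) • (q + q'))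
      ≤ (w x + w y) / 2 - w ((2⁻¹ : ℝ) • (x + y)) := fun q hq q' hq' =>
    hm (show (q, q') ∈ closure Ω ×ˢ closure Ω from ⟨hq, hq'⟩)
  by_contra hcon
  push Not at hcon
  have hpos : w ((2⁻¹ : ℝ) • (x + y)) < (w x + w y) / 2 := by linarith [hm' a ha b hb]
  have hne : x ≠ y := by
    rintro rfl
    have : (2⁻¹ : ℝ) • (x + x) = x := by module
    rw [this] at hpos
    linarith
  have hzΩ := hmid x hx y hy hne
  have hfr : ∀ p ∈ closure Ω, p ∉ Ω → w p = 0 := fun p hp hpΩ =>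
    hw0 p (by rw [hΩo.frontier_eq]; exact ⟨hp, hpΩ⟩)
  have hxΩ : x ∈ Ω := by
    by_contra h
    exact no_boundary_max hΩo hconv hball hx h (hfr x hx h) rfl hzΩ
      ((hws _ hzΩ).differentiableAt (by norm_num)) fun q hq => hm' q hq y hy
  have hyΩ : y ∈ Ω := by
    by_contra h
    refine no_boundary_max (y := x) hΩo hconv hball hy h (hfr y hy h) (add_comm x y ▸ rfl) hzΩ
      ((hws _ hzΩ).differentiableAt (by norm_num)) fun q hq => ?_
    have := hm' x hx q hq
    rw [add_comm q x, add_comm (w q), add_comm (w y)]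
    exact this
  have hev : ∀ p ∈ Ω, ψ =ᶠ[𝓝 p] fun p => -(w p) ^ 3 := fun p hp =>
    eventually_of_mem (hΩo.mem_nhds hp) hcube
  refine no_interior_max rfl (hws x hxΩ) (hws y hyΩ) (hws _ hzΩ) (hwpos x hxΩ) (hwpos y hyΩ)
    (hwpos _ hzΩ) (hev x hxΩ) (hev y hyΩ) (hev _ hzΩ) (hΔ x hxΩ) (hΔ y hyΩ) (hΔ _ hzΩ) hpos ?_
  filter_upwards [(hΩo.prod hΩo).mem_nhds (show (x, y) ∈ Ω ×ˢ Ω from ⟨hxΩ, hyΩ⟩)] with q hq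
  exact hm' _ (subset_closure hq.1) _ (subset_closure hq.2)

/-! ### Analyticity and exclusion of accumulating minimisers -/

lemma lapl_eq_laplacian {f : E2 → ℝ} {x : E2} (hf : ContDiffAt ℝ 2 f x) :
    lapl f x = Laplacian.laplacian f x := by
  rw [InnerProductSpace.laplacian_eq_iteratedFDeriv_orthonormalBasis f
    (EuclideanSpace.basisFun (Fin 2) ℝ)]
  have hd : DifferentiableAt ℝ (fderiv ℝ f) x :=
    (hf.fderiv_right (m := 1) (by norm_num)).differentiableAt (by norm_num)
  have key : ∀ i, pdR i (pdR i f) x = iteratedFDeriv ℝ 2 f x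
      ![EuclideanSpace.basisFun (Fin 2) ℝ i, EuclideanSpace.basisFun (Fin 2) ℝ i] := by
    intro i
    rw [iteratedFDeriv_two_apply]
    have : pdR i f = fun y => fderiv ℝ f y (EuclideanSpace.single i 1) := rfl
    rw [this, pdR, fderiv_clm_apply hd (differentiableAt_const _)]
    simp
  simp [lapl, key, Fin.sum_univ_two]

/-- `ψ - |·|²/4` is harmonic, and harmonic functions of two variables are real-analytic; the latter
is available for functions on `ℂ`, so the function is transported along `ℂ ≃ₗᵢ[ℝ] E2`. -/
lemma analyticAt_of_lapl_eq_one {Ω : Set E2} (hΩo : IsOpen Ω) {ψ : E2 → ℝ}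
    (hs : ∀ x ∈ Ω, ContDiffAt ℝ 2 ψ x) (hΔ : ∀ x ∈ Ω, lapl ψ x = 1) {x : E2} (hx : x ∈ Ω) :
    AnalyticAt ℝ ψ x := by
  set L : ℂ ≃ₗᵢ[ℝ] E2 := Complex.orthonormalBasisOneI.repr with hL
  set k : E2 → ℝ := ψ - quad (1 / 4) 0 0 with hk
  have hks : ∀ x ∈ Ω, ContDiffAt ℝ 2 k x := fun x hx =>
    (hs x hx).sub (contDiff_quad _ _ _).contDiffAt
  have hharm : InnerProductSpace.HarmonicAt (k ∘ L) (L.symm x) := by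
    refine ⟨?_, ?_⟩
    · exact ContDiffAt.comp _ (by simpa using hks x hx) L.contDiff.contDiffAt
    · have : L ⁻¹' Ω ∈ 𝓝 (L.symm x) :=
        L.continuous.continuousAt.preimage_mem_nhds (hΩo.mem_nhds (by simpa using hx))
      filter_upwards [this] with ζ hζ
      have h0 : Laplacian.laplacian k (L ζ) = 0 := by
        rw [← lapl_eq_laplacian (hks _ hζ), hk, lapl_sub_quad (hs _ hζ), hΔ _ hζ]; norm_num
      have hcomp : iteratedFDeriv ℝ 2 (k ∘ L) ζ =
          (iteratedFDeriv ℝ 2 k (L ζ)).compContinuousLinearMap fun _ => (L : ℂ →L[ℝ] E2) := by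
        simp only [← iteratedFDerivWithin_univ]
        exact L.toContinuousLinearEquiv.iteratedFDerivWithin_comp_right k uniqueDiffOn_univ
          (Set.mem_univ _) 2
      rw [InnerProductSpace.laplacian_eq_iteratedFDeriv_orthonormalBasis k
        (EuclideanSpace.basisFun (Fin 2) ℝ)] at h0
      rw [InnerProductSpace.laplacian_eq_iteratedFDeriv_orthonormalBasis (k ∘ L)
        Complex.orthonormalBasisOneI]
      beta_reduce at h0 ⊢
      rw [hcomp]
      have hb : ∀ i, L (Complex.orthonormalBasisOneI i) = EuclideanSpace.basisFun (Fin 2) ℝ i := by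
        intro i
        rw [hL, OrthonormalBasis.repr_self, EuclideanSpace.basisFun_apply]
      simp only [Pi.zero_apply, ← h0]
      refine Finset.sum_congr rfl fun i _ => ?_
      rw [ContinuousMultilinearMap.compContinuousLinearMap_apply]
      congr 1
      funext j
      fin_cases j <;> exact hb i
  have hA : AnalyticAt ℝ (k ∘ L) (L.symm x) := HarmonicAt.analyticAt hharm
  have hkA : AnalyticAt ℝ k x := by
    have h1 : AnalyticAt ℝ (fun y : E2 => L.symm y) x :=
      (L.symm.toContinuousLinearEquiv : E2 →L[ℝ] ℂ).analyticAt x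
    have h2 := AnalyticAt.comp hA h1
    have e : (k ∘ L) ∘ (fun y : E2 => L.symm y) = k := by funext y; simp
    rwa [e] at h2
  have hq : AnalyticAt ℝ (quad (1 / 4) 0 0) x := by
    have h : ∀ i : Fin 2, AnalyticAt ℝ (fun y : E2 => y i) x := fun i =>
      (EuclideanSpace.proj i : E2 →L[ℝ] ℝ).analyticAt x
    unfold quad
    exact (analyticAt_const.mul ((((h 0).sub analyticAt_const).pow 2).add
      (((h 1).sub analyticAt_const).pow 2))).add analyticAt_const
  have e : ψ = k + quad (1 / 4) 0 0 := by rw [hk]; simp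
  rw [e]
  exact hkA.add hq

/-- A ray issued from a point of a bounded open set first leaves it at a boundary point. -/
lemma exists_exit {Ω : Set E2} (hΩo : IsOpen Ω) (hΩb : Bornology.IsBounded Ω) {x v : E2}
    (hx : x ∈ Ω) (hv : v ≠ 0) :
    ∃ T : ℝ, x + T • v ∈ frontier Ω ∧ 0 < T ∧ ∀ t ∈ Set.Ico 0 T, x + t • v ∈ Ω := by
  set g : ℝ → E2 := fun t => x + t • v with hg
  have hgc : Continuous g := by fun_prop
  set S : Set ℝ := Set.Ici 0 ∩ g ⁻¹' Ωᶜ with hS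
  have hSc : IsClosed S := isClosed_Ici.inter (hΩo.isClosed_compl.preimage hgc)
  have hSb : BddBelow S := ⟨0, fun t ht => ht.1⟩
  have hSn : S.Nonempty := by
    obtain ⟨R, hR⟩ := hΩb.exists_norm_le
    have hvp : 0 < ‖v‖ := norm_pos_iff.2 hv
    have hR0 : 0 ≤ R := (norm_nonneg x).trans (hR x hx)
    have hT0 : 0 ≤ (R + ‖x‖ + 1) / ‖v‖ := by positivity
    refine ⟨(R + ‖x‖ + 1) / ‖v‖, hT0, fun hmem => ?_⟩
    have h1 := hR _ hmem
    have h2 : ‖((R + ‖x‖ + 1) / ‖v‖) • v‖ = R + ‖x‖ + 1 := by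
      rw [norm_smul, Real.norm_of_nonneg hT0]; field_simp
    have h3 := norm_sub_le (g ((R + ‖x‖ + 1) / ‖v‖)) x
    have h4 : g ((R + ‖x‖ + 1) / ‖v‖) - x = ((R + ‖x‖ + 1) / ‖v‖) • v := by simp [hg]
    rw [h4, h2] at h3
    linarith
  have hT := hSc.csInf_mem hSn hSb
  set T := sInf S with hTdef
  have hlt : ∀ t ∈ Set.Ico 0 T, g t ∈ Ω := by
    intro t ht
    by_contra h
    exact absurd (csInf_le hSb (show t ∈ S from ⟨ht.1, h⟩)) (not_le.2 ht.2)
  have hT0 : 0 < T := by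
    rcases lt_or_eq_of_le (show 0 ≤ T from hT.1) with h | h
    · exact h
    · exact absurd (show g T ∈ Ω by rw [← h]; simpa [hg] using hx) hT.2
  refine ⟨T, ?_, hT0, hlt⟩
  rw [hΩo.frontier_eq]
  refine ⟨?_, hT.2⟩
  have hcl : T ∈ closure (Set.Ico 0 T) := by
    rw [closure_Ico hT0.ne]; exact ⟨hT0.le, le_rfl⟩
  exact map_mem_closure (f := g) hgc hcl hlt

/-- If `ψ` is analytic, a negative value at `x` cannot recur at points `x + 2⁻ⁿ v` accumulating at `x`: by
the identity theorem `ψ` would be constant along the ray through them, up to the boundary, where it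
vanishes. -/
lemma no_accumulating_min {Ω : Set E2} (hΩo : IsOpen Ω) (hΩb : Bornology.IsBounded Ω)
    {ψ : E2 → ℝ} (hψc : ContinuousOn ψ (closure Ω))
    (hψa : ∀ x ∈ Ω, AnalyticAt ℝ ψ x) (hbd : ∀ x ∈ frontier Ω, ψ x = 0)
    {x v : E2} (hx : x ∈ Ω) (hv : v ≠ 0) (hneg : ψ x < 0)
    (hseq : ∀ n : ℕ, ψ (x + ((2⁻¹ : ℝ) ^ n) • v) = ψ x) : False := by
  obtain ⟨T, hTf, hT0, hlt⟩ := exists_exit hΩo hΩb hx hv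
  set g : ℝ → E2 := fun t => x + t • v with hg
  have hgc : Continuous g := by fun_prop
  have hga : ∀ t, AnalyticAt ℝ g t := fun t => by
    have : AnalyticAt ℝ (fun t : ℝ => t • v) t :=
      ((ContinuousLinearMap.id ℝ ℝ).smulRight v).analyticAt t
    exact analyticAt_const.add this
  have hfa : AnalyticOnNhd ℝ (ψ ∘ g) (Set.Ico 0 T) := fun t ht =>
    AnalyticAt.comp (hψa _ (hlt t ht)) (hga t)
  have hfreq : ∃ᶠ t in 𝓝[≠] (0 : ℝ), (ψ ∘ g) t = ψ x := by
    have ht : Tendsto (fun n : ℕ => (2⁻¹ : ℝ) ^ n) atTop (𝓝[≠] 0) := by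
      refine tendsto_nhdsWithin_iff.2 ⟨tendsto_pow_atTop_nhds_zero_of_lt_one (by norm_num)
        (by norm_num), Eventually.of_forall fun n => ?_⟩
      simp
    exact ht.frequently (Frequently.of_forall hseq)
  have heq := hfa.eqOn_of_preconnected_of_frequently_eq (fun _ _ => analyticAt_const)
    isPreconnected_Ico (show (0 : ℝ) ∈ Set.Ico 0 T from ⟨le_rfl, hT0⟩) hfreq
  have hcont : ContinuousOn (ψ ∘ g) (Set.Icc 0 T) := hψc.comp hgc.continuousOn fun t ht => by
    rcases lt_or_eq_of_le ht.2 with h | h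
    · exact subset_closure (hlt t ⟨ht.1, h⟩)
    · rw [h]; exact frontier_subset_closure hTf
  have hT : (ψ ∘ g) T = ψ x := by
    have hcl : closure (Set.Ico 0 T) = Set.Icc 0 T := closure_Ico hT0.ne
    exact heq.of_subset_closure hcont continuousOn_const Set.Ico_subset_Icc_self hcl.ge
      (show T ∈ Set.Icc 0 T from ⟨hT0.le, le_rfl⟩)
  have h0 : (ψ ∘ g) T = 0 := hbd _ hTf
  linarith

/-! ### Existence and uniqueness of the minimum point -/

/-- Kawohl: if `Ω` is bounded, open and strictly convex (the open segment
between any two distinct points of `closure Ω` lies in `Ω`), `Δψ = 1` in `Ω` and `ψ = 0` on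
`∂Ω`, then `ψ` attains its infimum over `Ω` at a unique point of `Ω`. -/
theorem stmt19 (Ω : Set E2) (hΩo : IsOpen Ω) (hΩne : Ω.Nonempty)
    (hΩb : Bornology.IsBounded Ω)
    (hconv : ∀ x ∈ closure Ω, ∀ y ∈ closure Ω, x ≠ y → openSegment ℝ x y ⊆ Ω)
    (ψ : E2 → ℝ)
    (hψc : ContinuousOn ψ (closure Ω))
    (hψsm : ContDiffOn ℝ (⊤ : ℕ∞) ψ Ω)
    (hΔ : ∀ x ∈ Ω, lapl ψ x = 1)
    (hbd : ∀ x ∈ frontier Ω, ψ x = 0) :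
    ∃! x₀ : E2, x₀ ∈ Ω ∧ ψ x₀ = sInf (ψ '' Ω) := by
  have hs : ∀ x ∈ Ω, ContDiffAt ℝ 2 ψ x := fun x hx =>
    (hψsm.contDiffAt (hΩo.mem_nhds hx)).of_le 
      (WithTop.coe_le_coe.2 (le_top : (2 : ℕ∞) ≤ ⊤))
  have hle : ∀ x ∈ closure Ω, ψ x ≤ 0 := nonpos_of_lapl_pos hΩo hΩb hψc hs
    (fun x hx => by rw [hΔ x hx]; norm_num) fun x hx => (hbd x hx).le
  have hball : ∀ x r, 0 < r → Metric.ball x r ⊆ Ω → ψ x ≤ -(r ^ 2 / 8) := fun x r hr hB =>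
    le_neg_sq_of_ball hψc hs hΔ hle hr hB
  have hneg : ∀ x ∈ Ω, ψ x < 0 := fun x hx => by
    obtain ⟨r, hr, hB⟩ := Metric.isOpen_iff.1 hΩo x hx
    have : 0 < r ^ 2 := by positivity
    linarith [hball x r hr hB]
  obtain ⟨m, hm, hmin⟩ := hΩb.isCompact_closure.exists_isMinOn hΩne.closure hψc
  have hmΩ : m ∈ Ω := by
    by_contra h
    have h0 := hbd m (by rw [hΩo.frontier_eq]; exact ⟨hm, h⟩)
    obtain ⟨p, hp⟩ := hΩne
    have h1 : ψ m ≤ ψ p := hmin (subset_closure hp)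
    linarith [hneg p hp]
  have hinf : sInf (ψ '' Ω) = ψ m :=
    IsLeast.csInf_eq ⟨⟨m, hmΩ, rfl⟩, by
      rintro _ ⟨p, hp, rfl⟩
      exact hmin (subset_closure hp)⟩
  rw [hinf]
  refine ⟨m, ⟨hmΩ, rfl⟩, ?_⟩
  rintro y ⟨hyΩ, hy⟩
  by_contra hne
  -- the exponent `1/3` is small enough for infinite slope at every boundary point, and large enough
  -- for the concavity maximum principle
  set w : E2 → ℝ := fun x => (-ψ x) ^ (1 / 3 : ℝ) with hw
  have hcube : ∀ x ∈ closure Ω, w x ^ 3 = -ψ x := fun x hx => by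
    rw [hw]
    simp only
    rw [← Real.rpow_natCast, ← Real.rpow_mul (by linarith [hle x hx])]
    norm_num
  have hconc := midpoint_concave (w := w) (ψ := ψ) hΩo hΩb hconv
    (hψc.neg.rpow_const fun x _ => Or.inr (by norm_num))
    (fun x hx => (hs x hx).neg.rpow_const_of_ne (by linarith [hneg x hx]))
    (fun x hx => Real.rpow_pos_of_pos (by linarith [hneg x hx]) _)
    (fun x hx => by simp [hw, hbd x hx])
    (fun x hx => by rw [hcube x (subset_closure hx), neg_neg]) hΔ
    (fun x r hr hB => by
      rw [hcube x (subset_closure (hB (Metric.mem_ball_self hr)))]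
      linarith [hball x r hr hB])
  -- the minimisers of `ψ` are closed under midpoints
  have hmid : ∀ p ∈ Ω, p ≠ m → ψ p = ψ m →
      (2⁻¹ : ℝ) • (m + p) ∈ Ω ∧ ψ ((2⁻¹ : ℝ) • (m + p)) = ψ m := by
    intro p hp hpm hpe
    have hq : (2⁻¹ : ℝ) • (m + p) ∈ Ω := hconv m hm p (subset_closure hp) (Ne.symm hpm)
      ⟨2⁻¹, 2⁻¹, by norm_num, by norm_num, by norm_num, by module⟩
    refine ⟨hq, le_antisymm ?_ (hmin (subset_closure hq))⟩
    have h1 := hconc m hm p (subset_closure hp)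
    have h2 : w p = w m := by simp [hw, hpe]
    have h3 : w m ≤ w ((2⁻¹ : ℝ) • (m + p)) := by linarith
    have h4 : w m ^ 3 ≤ w ((2⁻¹ : ℝ) • (m + p)) ^ 3 :=
      (Odd.strictMono_pow (by decide : Odd 3)).monotone h3
    rw [hcube m hm, hcube _ (subset_closure hq)] at h4
    linarith
  have hv : y - m ≠ 0 := sub_ne_zero.2 hne
  have hseq : ∀ n : ℕ, m + ((2⁻¹ : ℝ) ^ n) • (y - m) ∈ Ω ∧
      ψ (m + ((2⁻¹ : ℝ) ^ n) • (y - m)) = ψ m := by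
    intro n
    induction n with
    | zero => simpa using ⟨hyΩ, hy⟩
    | succ n ih =>
      have h := hmid _ ih.1 (by simp [hv]) ih.2
      have e : (2⁻¹ : ℝ) • (m + (m + ((2⁻¹ : ℝ) ^ n) • (y - m)))
          = m + ((2⁻¹ : ℝ) ^ (n + 1)) • (y - m) := by
        rw [pow_succ]; module
      rwa [e] at h
  exact no_accumulating_min hΩo hΩb hψc
    (fun x hx => analyticAt_of_lapl_eq_one hΩo hs hΔ hx) hbd hmΩ hv (hneg m hmΩ)
    fun n => (hseq n).2
end
end
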